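/- If g = sp_{2n}(ℂ), then for every nilradical n of a standard parabolic subalgebra of g, the coadjoint representation (n : n*) has a generic stabiliser. -/

import Mathlib

open Module LieAlgebra
open scoped Classical

noncomputable section

/-! ### Generalities: coadjoint stabilisers, index, Frobenius semiradical -/

/-- The stabiliser `q^ξ = {x : q | ξ([x, q]) = 0}` of `ξ ∈ q*` for the coadjoint
representation of a Lie algebra `q`. -/
def coadStab (𝕜 : Type*) (Q : Type*) [CommRing 𝕜] [LieRing Q] [LieAlgebra 𝕜 Q]
    (ξ : Module.Dual 𝕜 Q) : Submodule 𝕜 Q where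
  carrier := {x | ∀ y, ξ ⁅x, y⁆ = 0}
  add_mem' := by
    intro a b ha hb y
    rw [Set.mem_setOf_eq] at ha hb
    rw [add_lie, map_add, ha y, hb y, add_zero]
  zero_mem' := by intro y; rw [zero_lie, map_zero]
  smul_mem' := by
    intro c x hx y
    rw [Set.mem_setOf_eq] at hx
    rw [smul_lie, map_smul, hx y, smul_zero]

/-- The index of a Lie algebra: the minimal dimension of a coadjoint stabiliser. -/
def lieIndex (𝕜 : Type*) (Q : Type*) [CommRing 𝕜] [LieRing Q] [LieAlgebra 𝕜 Q] : ℕ :=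
  ⨅ ξ : Module.Dual 𝕜 Q, Module.finrank 𝕜 (coadStab 𝕜 Q ξ)

/-- `ξ ∈ q*` is regular if its stabiliser has minimal dimension. -/
def IsRegularDual (𝕜 : Type*) (Q : Type*) [CommRing 𝕜] [LieRing Q] [LieAlgebra 𝕜 Q]
    (ξ : Module.Dual 𝕜 Q) : Prop :=
  Module.finrank 𝕜 (coadStab 𝕜 Q ξ) = lieIndex 𝕜 Q

/-- The Frobenius semiradical `F(q) = Σ_{ξ regular} q^ξ`. -/
def frobeniusSemiradical (𝕜 : Type*) (Q : Type*) [CommRing 𝕜] [LieRing Q] [LieAlgebra 𝕜 Q] :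
    Submodule 𝕜 Q :=
  ⨆ ξ : {ξ : Module.Dual 𝕜 Q // IsRegularDual 𝕜 Q ξ}, coadStab 𝕜 Q ξ.1

/-! ### Zariski topology on a complex vector space -/

/-- The Zariski topology on a complex vector space: generated by the complements of zero
sets of polynomial functions (elements of the subalgebra of functions generated by the
linear functionals). -/
def zariskiTop (V : Type*) [AddCommGroup V] [Module ℂ V] : TopologicalSpace V :=
  TopologicalSpace.generateFrom
    {U : Set V | ∃ p ∈ Algebra.adjoin ℂ (Set.range fun l : Module.Dual ℂ V => (l : V → ℂ)),
      U = {v | p v ≠ 0}}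

/-- Zariski-open subset of a complex vector space. -/
def zOpen {V : Type*} [AddCommGroup V] [Module ℂ V] (s : Set V) : Prop :=
  (zariskiTop V).IsOpen s

/-- Zariski-dense subset of a complex vector space. -/
def zDense {V : Type*} [AddCommGroup V] [Module ℂ V] (s : Set V) : Prop :=
  @Dense V (zariskiTop V) s

/-- The dimension of a subset of a complex vector space: the (topological) Krull dimension
with respect to the Zariski topology. -/
def zDim {V : Type*} [AddCommGroup V] [Module ℂ V] (s : Set V) : WithBot ℕ∞ :=
  letI := zariskiTop V
  topologicalKrullDim s

/-! ### Exponentials and stabilisers in the concrete model `n* ≅ n⁻` -/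

/-- The (truncated) exponential of a nilpotent endomorphism. For `x` in a nilradical `n`,
`nilExp (ad x)` is the adjoint action of the element `exp x` of the unipotent group
`N = exp(n)`; since `exp : n → N` is bijective, every element of `N` is of this form. -/
def nilExp {L : Type*} [AddCommGroup L] [Module ℂ L] (f : Module.End ℂ L) : Module.End ℂ L :=
  ∑ i ∈ Finset.range (Module.finrank ℂ L + 1), ((i.factorial : ℂ)⁻¹) • f ^ i

/-- For `v ∈ n⁻ ≅ n*`, the stabiliser of the linear functional `κ(v, ·)|_n` inside a (possibly
larger) subalgebra `q`, namely `{x ∈ q | κ(v, [x, n]) = 0}`, where `κ` is the Killing form.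
For `q = n` this is the coadjoint stabiliser `n^v`. -/
def killStab {L : Type*} [LieRing L] [LieAlgebra ℂ L] (v : L) (n q : LieSubalgebra ℂ L) :
    Submodule ℂ L where
  carrier := {x | x ∈ q ∧ ∀ y ∈ n, killingForm ℂ L v ⁅x, y⁆ = 0}
  add_mem' := by
    rintro a b ⟨ha, ha'⟩ ⟨hb, hb'⟩
    refine ⟨q.add_mem ha hb, fun y hy => ?_⟩
    rw [add_lie, map_add, ha' y hy, hb' y hy, add_zero]
  zero_mem' := ⟨q.zero_mem, fun y hy => by rw [zero_lie, map_zero]⟩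
  smul_mem' := by
    rintro c x ⟨hx, hx'⟩
    refine ⟨q.smul_mem c hx, fun y hy => ?_⟩
    rw [smul_lie, map_smul, hx' y hy, smul_zero]

/-! ### Triangular decompositions, root data and the Kostant cascade -/

/-- The support of a root (in simple-root coordinates). -/
def fsupp {SR : Type*} [Fintype SR] (γ : SR → ℤ) : Finset SR :=
  Finset.univ.filter fun a => γ a ≠ 0

/-- The data of a triangular decomposition of a complex simple Lie algebra `L`:
a Cartan subalgebra, a root-space decomposition indexed by the coordinates of the
roots with respect to the simple roots `SR`, the highest root, and a compatible
family of projections onto sums of root spaces. -/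
structure TriangularData (L : Type*) [LieRing L] [LieAlgebra ℂ L]
    (SR : Type*) [Fintype SR] [DecidableEq SR] where
  /-- the set of all roots, written in simple-root coordinates -/
  R : Finset (SR → ℤ)
  /-- the root space attached to `γ`; `rs 0` is the Cartan subalgebra, `rs γ = ⊥` off roots -/
  rs : (SR → ℤ) → Submodule ℂ L
  /-- the Cartan subalgebra `t` -/
  cartan : LieSubalgebra ℂ L
  rs_zero : rs 0 = cartan.toSubmodule
  rs_dim : ∀ γ ∈ R, Module.finrank ℂ (rs γ) = 1
  rs_bot : ∀ γ : SR → ℤ, γ ≠ 0 → γ ∉ R → rs γ = ⊥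
  root_ne_zero : ∀ γ ∈ R, γ ≠ 0
  root_neg : ∀ γ ∈ R, -γ ∈ R
  root_pos_or_neg : ∀ γ ∈ R, (∀ a, 0 ≤ γ a) ∨ (∀ a, γ a ≤ 0)
  root_single : ∀ a : SR, Pi.single a 1 ∈ R
  /-- the highest root `θ` -/
  theta : SR → ℤ
  theta_mem : theta ∈ R
  theta_highest : ∀ γ ∈ R, γ ≤ theta
  bracket_mem : ∀ γ δ : SR → ℤ, ∀ x ∈ rs γ, ∀ y ∈ rs δ, ⁅x, y⁆ ∈ rs (γ + δ)
  isInternal : DirectSum.IsInternal (fun γ : {γ : SR → ℤ // γ = 0 ∨ γ ∈ R} => rs γ.1)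
  /-- `proj S` is the projection onto `⊕_{γ ∈ S} rs γ` along `⊕_{γ ∉ S} rs γ` -/
  proj : Set (SR → ℤ) → (L →ₗ[ℂ] L)
  proj_mem : ∀ (S : Set (SR → ℤ)) (x : L), proj S x ∈ ⨆ γ ∈ S, rs γ
  proj_compl : ∀ (S : Set (SR → ℤ)) (x : L), x - proj S x ∈ ⨆ γ ∈ Sᶜ, rs γ

namespace TriangularData

variable {L : Type*} [LieRing L] [LieAlgebra ℂ L]
  {SR : Type*} [Fintype SR] [DecidableEq SR]
  (td : TriangularData L SR)

/-- The set `Δ⁺` of positive roots. -/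
def posR : Finset (SR → ℤ) := td.R.filter fun γ => ∀ a, 0 ≤ γ a

/-- The set of roots `Δ(n_T)` of the nilradical `n_T` attached to a set `T` of simple
roots: the positive roots having a strictly positive coefficient on some element of `T`. -/
def nilRoots (T : Finset SR) : Finset (SR → ℤ) :=
  td.posR.filter fun γ => ∃ a ∈ T, 0 < γ a

/-- The nilradical `n_T` of the standard parabolic subalgebra `p_T`. -/
def nilrad (T : Finset SR) : LieSubalgebra ℂ L :=
  LieSubalgebra.lieSpan ℂ L (⋃ γ ∈ (td.nilRoots T : Set (SR → ℤ)), (td.rs γ : Set L))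

/-- The Borel subalgebra `b = t ⊕ u` (as a subspace). -/
def borelSub : Submodule ℂ L :=
  td.rs 0 ⊔ ⨆ γ ∈ (td.posR : Set (SR → ℤ)), td.rs γ

/-- The parabolic subalgebra `p_T` (as a subspace): everything except `n_T⁻`. -/
def parabSub (T : Finset SR) : Submodule ℂ L :=
  td.rs 0 ⊔ ⨆ γ ∈ {γ : SR → ℤ | γ ∈ td.R ∧ -γ ∉ td.nilRoots T}, td.rs γ

/-- The set of roots of the opposite nilradical `n_T⁻`. -/
def negSet (T : Finset SR) : Set (SR → ℤ) := (fun γ => -γ) '' (td.nilRoots T : Set (SR → ℤ))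

/-- The opposite nilradical `n_T⁻ ⊆ u⁻`, which is identified with `n_T*` via the
Killing form and the decomposition `g = p_T ⊕ n_T⁻`. -/
def negNilSub (T : Finset SR) : Submodule ℂ L := ⨆ γ ∈ td.negSet T, td.rs γ

/-- The Heisenberg subset `H_β` attached to a positive root `β`: the positive roots in
the root subsystem generated by `supp β` that are not orthogonal to `β`. -/
def heisRoots (β : SR → ℤ) : Finset (SR → ℤ) :=
  td.posR.filter fun γ => fsupp γ ⊆ fsupp β ∧ (γ = β ∨ β - γ ∈ td.R)

/-- `Φ(β) = Π ∩ H_β`. -/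
def Phi (β : SR → ℤ) : Finset SR :=
  Finset.univ.filter fun a => Pi.single a 1 ∈ td.heisRoots β

/-- `K` is the Kostant cascade: a maximal set of pairwise strongly orthogonal positive
roots, containing the highest root, such that each `β ∈ K` is the highest root of the root
subsystem generated by its support and such that the attached Heisenberg subsets
partition `Δ⁺`. -/
structure IsCascade (K : Finset (SR → ℤ)) : Prop where
  subset_pos : K ⊆ td.posR
  theta_mem : td.theta ∈ K
  strong_orth : ∀ β ∈ K, ∀ β' ∈ K, β ≠ β' → β + β' ∉ td.R ∧ β - β' ∉ td.R
  highest : ∀ β ∈ K, ∀ γ ∈ td.posR, fsupp γ ⊆ fsupp β → γ ≤ β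
  partition : ∀ γ ∈ td.posR, ∃! β, β ∈ K ∧ γ ∈ td.heisRoots β

/-- `K(n_T) = K ∩ Δ(n_T)`. -/
def cascadeK (K : Finset (SR → ℤ)) (T : Finset SR) : Finset (SR → ℤ) := K ∩ td.nilRoots T

/-- The set of simple roots of the optimisation of `n_T`, namely
`T̃ = ⋃_{β ∈ K(n_T)} Φ(β)`; the optimisation of `n_T` is `n_{T̃}`. -/
def optT (K : Finset (SR → ℤ)) (T : Finset SR) : Finset SR :=
  (td.cascadeK K T).biUnion td.Phi

/-- The cascade subspace `E = ⊕_{β ∈ K(n_T)} g_{−β} ⊆ n_T⁻ ≅ n_T*`. -/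
def cascadeSub (K : Finset (SR → ℤ)) (T : Finset SR) : Submodule ℂ L :=
  ⨆ β ∈ (td.cascadeK K T : Set (SR → ℤ)), td.rs (-β)

/-- `v = Σ_{β ∈ K(n_T)} e_{−β}` with all `e_{−β} ∈ g_{−β}` nonzero is a cascade point
of `n_T⁻ ≅ n_T*`. -/
def IsCascadePoint (K : Finset (SR → ℤ)) (T : Finset SR) (v : L) : Prop :=
  ∃ e : (SR → ℤ) → L,
    (∀ β ∈ td.cascadeK K T, e β ∈ td.rs (-β) ∧ e β ≠ 0) ∧ v = ∑ β ∈ td.cascadeK K T, e β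

/-- `ind n_T`, computed in the model `n_T* ≅ n_T⁻`. -/
def nilIndex (T : Finset SR) : ℕ :=
  ⨅ v : ↥(td.negNilSub T), Module.finrank ℂ (killStab (v : L) (td.nilrad T) (td.nilrad T))

/-- `v ∈ n_T⁻ ≅ n_T*` is a regular point. -/
def IsRegPoint (T : Finset SR) (v : L) : Prop :=
  v ∈ td.negNilSub T ∧
    Module.finrank ℂ (killStab v (td.nilrad T) (td.nilrad T)) = td.nilIndex T

/-- The Frobenius semiradical `F(n_T) = Σ_{v regular} n_T^v`. -/
def frobNil (T : Finset SR) : Submodule ℂ L :=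
  ⨆ v : {v : L // td.IsRegPoint T v}, killStab (v : L) (td.nilrad T) (td.nilrad T)

/-- `v ∈ n_T⁻ ≅ n_T*` is a generic point for the coadjoint-type action on `n_T*` of the
unipotent group `exp(q)` (where `n_T ⊆ q ⊆ b`): there is a Zariski-dense open subset `Ω`
containing `v` on which all stabilisers (inside `q`) are conjugate under the group
`exp(q) = {exp(ad x) : x ∈ q}` to the stabiliser of `v`.  The stabiliser of such a point is
called a generic stabiliser. -/
def IsGenericStabPoint (T : Finset SR) (q : LieSubalgebra ℂ L) (v : L) : Prop :=
  ∃ Ω : Set ↥(td.negNilSub T), zOpen Ω ∧ zDense Ω ∧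
    (∃ hv : v ∈ td.negNilSub T, (⟨v, hv⟩ : ↥(td.negNilSub T)) ∈ Ω) ∧
    ∀ w ∈ Ω, ∃ x ∈ q,
      (killStab v (td.nilrad T) q).map (nilExp (LieAlgebra.ad ℂ L x)) =
        killStab (w : L) (td.nilrad T) q

/-- The saturation `exp(q)·E ⊆ n_T⁻ ≅ n_T*` of the cascade subspace `E` under the group
`exp(q)`: the coadjoint action is `exp(ad x)` followed by the projection to `n_T⁻`
along `p_T`. -/
def satSet (K : Finset (SR → ℤ)) (T : Finset SR) (q : LieSubalgebra ℂ L) :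
    Set ↥(td.negNilSub T) :=
  {w | ∃ x ∈ q, ∃ u ∈ td.cascadeSub K T,
    nilExp (LieAlgebra.ad ℂ L x) u - (w : L) ∈ td.parabSub T}

/-- The coadjoint action of `exp x` on `n_T* ≅ n_T⁻`: apply `exp(ad x)` and project
back to `n_T⁻` along `p_T`. -/
def coactOn (T : Finset SR) (x : L) (w : ↥(td.negNilSub T)) : ↥(td.negNilSub T) :=
  ⟨td.proj (td.negSet T) (nilExp (LieAlgebra.ad ℂ L x) (w : L)), td.proj_mem _ _⟩

/-- The algebra `S(n_T) = ℂ[n_T*]` of polynomial functions on `n_T* ≅ n_T⁻`. -/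
def polyAlg (T : Finset SR) : Subalgebra ℂ (↥(td.negNilSub T) → ℂ) :=
  Algebra.adjoin ℂ
    (Set.range fun l : Module.Dual ℂ ↥(td.negNilSub T) => (l : ↥(td.negNilSub T) → ℂ))

def invAlg (T : Finset SR) (q : LieSubalgebra ℂ L) : Subalgebra ℂ ↥(td.polyAlg T) where
  carrier := {F | ∀ x ∈ q, ∀ w, (F : ↥(td.negNilSub T) → ℂ) (td.coactOn T x w)
    = (F : ↥(td.negNilSub T) → ℂ) w}
  mul_mem' := by
    intro F G hF hG x hx w
    simp only [Set.mem_setOf_eq] at hF hG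
    simp only [MulMemClass.coe_mul, Pi.mul_apply, hF x hx w, hG x hx w]
  add_mem' := by
    intro F G hF hG x hx w
    simp only [Set.mem_setOf_eq] at hF hG
    simp only [AddMemClass.coe_add, Pi.add_apply, hF x hx w, hG x hx w]
  algebraMap_mem' := by
    intro c x hx w
    rfl

/-- For nested nilradicals `n_Ts ⊆ n_Tb`, the algebra of `exp(q)`-invariants in
`S(n_Ts) ⊆ S(n_Tb)`, realised inside the functions on `n_Tb⁻ ≅ n_Tb*`:
`S(n_Ts)` is generated by the linear functionals factoring through the projection onto
`n_Ts⁻`. -/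
def relInv (Tb Ts : Finset SR) (q : LieSubalgebra ℂ L) :
    Subalgebra ℂ (↥(td.negNilSub Tb) → ℂ) where
  carrier := {F | F ∈ Algebra.adjoin ℂ
      {f : ↥(td.negNilSub Tb) → ℂ |
        ∃ l : Module.Dual ℂ L, f = fun w : ↥(td.negNilSub Tb) => l (td.proj (td.negSet Ts) (w : L))} ∧
      ∀ x ∈ q, ∀ w, F (td.coactOn Tb x w) = F w}
  mul_mem' := by
    rintro F G ⟨hF1, hF2⟩ ⟨hG1, hG2⟩
    refine ⟨mul_mem hF1 hG1, fun x hx w => ?_⟩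
    simp only [Pi.mul_apply, hF2 x hx w, hG2 x hx w]
  add_mem' := by
    rintro F G ⟨hF1, hF2⟩ ⟨hG1, hG2⟩
    refine ⟨add_mem hF1 hG1, fun x hx w => ?_⟩
    simp only [Pi.add_apply, hF2 x hx w, hG2 x hx w]
  algebraMap_mem' := by
    intro c
    exact ⟨Subalgebra.algebraMap_mem _ c, fun x hx w => rfl⟩

end TriangularData

/-- The transcendence degree of a commutative `ℂ`-algebra. -/
def trdegC (A : Type*) [CommRing A] [Algebra ℂ A] : Cardinal :=
  ⨆ s : {s : Set A // AlgebraicIndependent ℂ ((↑) : s → A)}, Cardinal.mk s.1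


/-- The root `ε_i − ε_j` (`i < j`) of `sp_{2m}` in simple-root coordinates
(`0`-based indexing, `α_{m-1} = 2ε_m` the long simple root). -/
def epsSub {m : ℕ} (i j : Fin m) : Fin m → ℤ :=
  fun a => (if i ≤ a then 1 else 0) - (if j ≤ a then 1 else 0)

/-- The root `ε_i + ε_j` (`i ≤ j`) of `sp_{2m}` in simple-root coordinates. -/
def epsAdd {m : ℕ} (i j : Fin m) : Fin m → ℤ :=
  fun a => if (a : ℕ) = m - 1 then 1 else (if i ≤ a then 1 else 0) + (if j ≤ a then 1 else 0)

/-!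
Define the degree of a root as the sum of its `ε_i`-coordinates over the indices `i ≤ max T`.
Only the components of `w` in degrees `-2`, `-1` and `0` pair with the nilradical, and the degree
`-2` component is a symmetric matrix `S`. When the principal minors of `S` do not vanish, a block `LDLᵀ`
congruence, realised by the exponential of the degree `0` part of the nilradical, conjugates `S` to
a block diagonal matrix `D`. Nondegeneracy of `D` kills the degree `0` and `1` parts of the
stabiliser, and what is left in degree `2` does not depend on `D` or on the other components of `w`.
So the stabiliser is conjugate to the one at the identity matrix.
-/

section UnipotentLogarithm

open IsNilpotent Polynomial

lemma exists_exp_eq_one_add_add_sq_mul {A : Type*} [CommRing A] [Module ℚ A] {x : A}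
    (hx : IsNilpotent x) : ∃ r, exp x = 1 + x + x ^ 2 * r := by
  obtain ⟨n, hn⟩ := hx
  have hn' : x ^ (n + 2) = 0 := pow_eq_zero_of_le (by omega) hn
  refine ⟨∑ i ∈ Finset.range n, ((i + 2).factorial : ℚ)⁻¹ • x ^ i, ?_⟩
  rw [exp_eq_sum hn', Finset.sum_range_succ', Finset.sum_range_succ', Finset.mul_sum]
  simp only [mul_smul_comm, ← pow_add, zero_add, add_assoc, Nat.reduceAdd, Nat.factorial_one,
    Nat.factorial_zero, Nat.cast_one, inv_one, one_smul, pow_zero, pow_one]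
  simp only [add_comm 2]
  ring

lemma exists_exp_mul_eq_one_add {A : Type*} [CommRing A] [Module ℚ A] {x : A}
    (hx : IsNilpotent x) : ∃ q, exp (x * q) = 1 + x := by
  have hxq (q : A) : IsNilpotent (x * q) := (Commute.all x q).isNilpotent_mul_right hx
  have approximation (k : ℕ) : ∃ q r, exp (x * q) = 1 + x + x ^ (k + 1) * r := by
    induction k with
    | zero => exact ⟨0, -1, by rw [mul_zero, exp_zero]; ring⟩
    | succ k ih =>
      obtain ⟨q, r, hq⟩ := ih
      let d := -(x ^ k * r)
      obtain ⟨s, hs⟩ := exists_exp_eq_one_add_add_sq_mul (hxq d)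
      refine ⟨q + d, -r - x ^ k * r * r + x ^ k * r * r * s * (1 + x + x ^ (k + 1) * r), ?_⟩
      rw [mul_add, exp_add_of_commute (Commute.all _ _) (hxq q) (hxq d), hq, hs]
      simp only [d]
      ring
  obtain ⟨n, hn⟩ := hx
  obtain ⟨q, r, hq⟩ := approximation n
  exact ⟨q, by rw [hq, _root_.pow_succ, hn]; ring⟩

lemma exists_exp_aeval_mul_eq_one_add {A : Type*} [Ring A] [Algebra ℚ A] {x : A}
    (hx : IsNilpotent x) : ∃ p : ℚ[X], exp (aeval x p * x) = 1 + x := by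
  let φ : ℚ[X] →+* A := (aeval x).toRingHom
  let y : ℚ[X] ⧸ RingHom.ker φ := Ideal.Quotient.mk _ X
  have hφy : RingHom.kerLift φ y = x := (RingHom.kerLift_mk φ X).trans (aeval_X x)
  have hy : IsNilpotent y :=
    (IsNilpotent.map_iff (RingHom.kerLift_injective φ)).1 (hφy ▸ hx)
  obtain ⟨q, hq⟩ := exists_exp_mul_eq_one_add hy
  obtain ⟨p, rfl⟩ := Ideal.Quotient.mk_surjective q
  have hexp := map_exp ((Commute.all y (Ideal.Quotient.mk _ p)).isNilpotent_mul_right hy)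
    (RingHom.kerLift φ)
  rw [hq, map_add, map_one, mul_comm, map_mul, hφy, RingHom.kerLift_mk] at hexp
  exact ⟨p, hexp.symm⟩

end UnipotentLogarithm

section StrictBlockUpper

open Matrix

variable {n R : Type*} [CommRing R] {b : n → ℕ}

/-- The matrices which are strictly block upper triangular for the block labelling `b`. This is the
nilradical of the Lie algebra of block upper triangular matrices. -/
def strictBlockUpper (R : Type*) [CommRing R] (b : n → ℕ) : Submodule R (Matrix n n R) where
  carrier := {X | ∀ i j, b j ≤ b i → X i j = 0}
  add_mem' hX hY i j hij := by rw [Matrix.add_apply, hX i j hij, hY i j hij, add_zero]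
  zero_mem' _ _ _ := rfl
  smul_mem' c _ hX i j hij := by rw [Matrix.smul_apply, hX i j hij, smul_zero]

lemma blockTriangular_of_mem_strictBlockUpper {X : Matrix n n R}
    (hX : X ∈ strictBlockUpper R b) : X.BlockTriangular b := fun _ _ hij => hX _ _ hij.le

variable [Fintype n]

lemma mul_mem_strictBlockUpper {D X : Matrix n n R} (hD : D.BlockTriangular b)
    (hX : X ∈ strictBlockUpper R b) : D * X ∈ strictBlockUpper R b := by
  intro i j hij
  rw [Matrix.mul_apply]
  refine Finset.sum_eq_zero fun l _ => ?_
  rcases lt_or_ge (b l) (b i) with hli | hil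
  · rw [hD hli, zero_mul]
  · rw [hX l j (hij.trans hil), mul_zero]

variable [DecidableEq n]

lemma pow_apply_eq_zero_of_mem_strictBlockUpper {X : Matrix n n R}
    (hX : X ∈ strictBlockUpper R b) (r : ℕ) {i j : n} (hij : b j < b i + r) :
    (X ^ r) i j = 0 := by
  induction r generalizing j with
  | zero =>
    rw [pow_zero, Matrix.one_apply_ne]
    rintro rfl
    omega
  | succ r ih =>
    rw [pow_succ, Matrix.mul_apply]
    refine Finset.sum_eq_zero fun l _ => ?_
    by_cases hl : b l < b i + r
    · rw [ih hl, zero_mul]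
    · rw [hX l j (by omega), mul_zero]

lemma isNilpotent_of_mem_strictBlockUpper {X : Matrix n n R} (hX : X ∈ strictBlockUpper R b) :
    IsNilpotent X := by
  refine ⟨(∑ i, b i) + 1, Matrix.ext fun i j => pow_apply_eq_zero_of_mem_strictBlockUpper hX _ ?_⟩
  have := Finset.single_le_sum (f := b) (fun _ _ => Nat.zero_le _) (Finset.mem_univ j)
  omega

lemma exists_mem_strictBlockUpper_exp_eq [Algebra ℚ R] {N : Matrix n n R}
    (hN : N ∈ strictBlockUpper R b) :
    ∃ X ∈ strictBlockUpper R b, IsNilpotent.exp X = 1 + N := by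
  obtain ⟨p, hp⟩ := exists_exp_aeval_mul_eq_one_add (isNilpotent_of_mem_strictBlockUpper hN)
  refine ⟨Polynomial.aeval N p * N, mul_mem_strictBlockUpper ?_ hN, hp⟩
  have hN' : N ∈ blockTriangularSubalgebra ℚ R b := blockTriangular_of_mem_strictBlockUpper hN
  exact Algebra.adjoin_singleton_le hN' (Polynomial.aeval_mem_adjoin_singleton ℚ N)

end StrictBlockUpper

section CongruenceNormalForm

open Matrix

variable {n R : Type*} [CommRing R]

/-- All principal minors of `S` are invertible. For the symmetric matrix which records the lowest
component of a linear functional on the nilradical, this is the genericity condition. -/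
def HasUnitPrincipalMinors [DecidableEq n] (S : Matrix n n R) : Prop :=
  ∀ s : Finset n, IsUnit (S.submatrix ((↑) : s → n) ((↑) : s → n)).det

variable [DecidableEq n]

lemma hasUnitPrincipalMinors_one : HasUnitPrincipalMinors (1 : Matrix n n R) := fun _ => by
  rw [Matrix.submatrix_one _ Subtype.val_injective, Matrix.det_one]
  exact isUnit_one

variable [Fintype n]

lemma HasUnitPrincipalMinors.isUnit_det {S : Matrix n n R} (hS : HasUnitPrincipalMinors S) :
    IsUnit S.det := by
  rw [← Matrix.det_submatrix_equiv_self (Equiv.subtypeUnivEquiv Finset.mem_univ) S]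
  exact hS Finset.univ

lemma exists_mulVec_eqOn {S : Matrix n n R} {s : Finset n}
    (hs : IsUnit (S.submatrix ((↑) : s → n) ((↑) : s → n)).det) (v : n → R) :
    ∃ c : n → R, (∀ i ∉ s, c i = 0) ∧ ∀ i ∈ s, (S *ᵥ c) i = v i := by
  let M := S.submatrix ((↑) : s → n) ((↑) : s → n)
  let c₀ : s → R := M⁻¹ *ᵥ fun i => v i
  have hc₀ : M *ᵥ c₀ = fun i : s => v i := by
    rw [Matrix.mulVec_mulVec, Matrix.mul_nonsing_inv _ hs, Matrix.one_mulVec]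
  refine ⟨fun i => if hi : i ∈ s then c₀ ⟨i, hi⟩ else 0, fun i hi => dif_neg hi, fun i hi => ?_⟩
  have hsum := Finset.sum_coe_sort s fun j =>
    S i j * if hj : j ∈ s then c₀ ⟨j, hj⟩ else 0
  simp only [Finset.coe_mem, dite_true] at hsum
  refine Eq.trans (Finset.sum_subset (Finset.subset_univ s) fun j _ hj => ?_).symm
    (hsum.symm.trans (congrFun hc₀ ⟨i, hi⟩))
  simp only [hj, dite_false, mul_zero]

lemma exists_blockTriangular_transpose_mul_mul {S : Matrix n n R} (hS : S.IsSymm)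
    (hminors : HasUnitPrincipalMinors S) (b : n → ℕ) :
    ∃ N ∈ strictBlockUpper R b, ((1 + N)ᵀ * S * (1 + N)).BlockTriangular b := by
  choose c hc_supp hc using fun j =>
    exists_mulVec_eqOn (hminors (Finset.univ.filter fun i => b i < b j)) fun i => -S i j
  let N : Matrix n n R := (Matrix.of c)ᵀ
  have hN : N ∈ strictBlockUpper R b := fun i j hij => hc_supp j i (by simpa using hij)
  refine ⟨N, hN, ?_⟩
  have hSN : (S * (1 + N))ᵀ.BlockTriangular b := by
    intro j i hij
    have hcol : (S * N) i j = -S i j := hc j i (by simpa using hij)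
    rw [Matrix.transpose_apply, Matrix.mul_add, Matrix.mul_one, Matrix.add_apply, hcol,
      add_neg_cancel]
  rw [← hS.eq, ← Matrix.transpose_mul]
  exact hSN.mul (Matrix.blockTriangular_one.add (blockTriangular_of_mem_strictBlockUpper hN))

lemma exists_eq_exp_congruence [Algebra ℚ R] {S : Matrix n n R} (hS : S.IsSymm)
    (hminors : HasUnitPrincipalMinors S) (b : n → ℕ) :
    ∃ X ∈ strictBlockUpper R b, ∃ D : Matrix n n R, D.IsSymm ∧ D.BlockTriangular b ∧
      IsUnit D.det ∧ S = (IsNilpotent.exp (-X))ᵀ * D * IsNilpotent.exp (-X) := by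
  obtain ⟨N, hN, hD⟩ := exists_blockTriangular_transpose_mul_mul hS hminors b
  obtain ⟨X, hX, hXN⟩ := exists_mem_strictBlockUpper_exp_eq hN
  have hinv : (1 + N) * IsNilpotent.exp (-X) = 1 := by
    rw [← hXN, IsNilpotent.exp_mul_exp_neg_self (isNilpotent_of_mem_strictBlockUpper hX)]
  have hdet : IsUnit (1 + N).det := by
    refine IsUnit.of_mul_eq_one (IsNilpotent.exp (-X)).det ?_
    rw [← Matrix.det_mul, hinv, Matrix.det_one]
  refine ⟨X, hX, (1 + N)ᵀ * S * (1 + N), ?_, hD, ?_, ?_⟩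
  · rw [Matrix.IsSymm, Matrix.transpose_mul, Matrix.transpose_mul, Matrix.transpose_transpose,
      hS.eq, Matrix.mul_assoc]
  · rw [Matrix.det_mul, Matrix.det_mul, Matrix.det_transpose]
    exact (hdet.mul hminors.isUnit_det).mul hdet
  · calc S = ((1 + N) * IsNilpotent.exp (-X))ᵀ * S * ((1 + N) * IsNilpotent.exp (-X)) := by
          rw [hinv, Matrix.transpose_one, Matrix.one_mul, Matrix.mul_one]
      _ = _ := by simp only [Matrix.transpose_mul, Matrix.mul_assoc]

/-- The infinitesimal congruence action `S ↦ -(Xᵀ S + S X)` of a matrix `X`. -/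
def congruenceAction (X : Matrix n n R) : Module.End R (Matrix n n R) :=
  LinearMap.mulLeft R (-X)ᵀ + LinearMap.mulRight R (-X)

lemma congruenceAction_apply (X S : Matrix n n R) :
    congruenceAction X S = -(Xᵀ * S + S * X) := by
  simp only [congruenceAction, LinearMap.add_apply, LinearMap.mulLeft_apply,
    LinearMap.mulRight_apply, Matrix.transpose_neg, neg_mul, mul_neg, neg_add]

lemma isNilpotent_congruenceAction {X : Matrix n n R} (hX : IsNilpotent X) :
    IsNilpotent (congruenceAction X) :=
  Commute.isNilpotent_add (LinearMap.commute_mulLeft_right _ _)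
    ((LinearMap.isNilpotent_mulLeft_iff R _).2 (Matrix.isNilpotent_transpose_iff.2 hX.neg))
    ((LinearMap.isNilpotent_mulRight_iff R _).2 hX.neg)

lemma exp_congruenceAction [Algebra ℚ R] {X : Matrix n n R} (hX : IsNilpotent X)
    (S : Matrix n n R) :
    IsNilpotent.exp (congruenceAction X) S =
      (IsNilpotent.exp (-X))ᵀ * S * IsNilpotent.exp (-X) := by
  obtain ⟨r, hr⟩ := hX.neg
  have hleft : LinearMap.mulLeft R (-X)ᵀ ^ r = 0 := by
    rw [LinearMap.pow_mulLeft, ← Matrix.transpose_pow, hr, Matrix.transpose_zero,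
      LinearMap.mulLeft_zero_eq_zero]
  have hright : LinearMap.mulRight R (-X) ^ r = 0 := by
    rw [LinearMap.pow_mulRight, hr, LinearMap.mulRight_zero_eq_zero]
  rw [congruenceAction, IsNilpotent.exp_add_of_commute (LinearMap.commute_mulLeft_right _ _)
      ⟨r, hleft⟩ ⟨r, hright⟩,
    IsNilpotent.exp_eq_sum hleft, IsNilpotent.exp_eq_sum hright, IsNilpotent.exp_eq_sum hr]
  simp only [LinearMap.pow_mulLeft, LinearMap.pow_mulRight, Module.End.mul_apply,
    LinearMap.sum_apply, LinearMap.smul_apply, LinearMap.mulLeft_apply, LinearMap.mulRight_apply,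
    Matrix.transpose_sum, Matrix.transpose_smul, Matrix.transpose_pow, Finset.sum_mul,
    Finset.mul_sum, smul_mul_assoc, mul_smul_comm, Matrix.mul_assoc]

end CongruenceNormalForm

section Components

open DirectSum

variable {ι R M : Type*} [Semiring R] [AddCommMonoid M] [Module R M] (ℳ : ι → Submodule R M)

/-- The sum of the components of a graded module whose degrees lie in `S`. -/
def componentSum (S : Set ι) : Submodule R M := ⨆ i ∈ S, ℳ i

variable {ℳ}

lemma mem_componentSum_of_mem {S : Set ι} {i : ι} (hi : i ∈ S) {x : M} (hx : x ∈ ℳ i) :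
    x ∈ componentSum ℳ S :=
  le_biSup ℳ hi hx

lemma componentSum_le {S : Set ι} {p : Submodule R M} (h : ∀ i ∈ S, ℳ i ≤ p) :
    componentSum ℳ S ≤ p :=
  iSup₂_le h

lemma componentSum_le_of_ne_bot {S S' : Set ι} (h : ∀ i ∈ S, ℳ i ≠ ⊥ → i ∈ S') :
    componentSum ℳ S ≤ componentSum ℳ S' := by
  refine componentSum_le fun i hi => ?_
  by_cases hbot : ℳ i = ⊥
  · exact hbot.le.trans bot_le
  · exact fun x => mem_componentSum_of_mem (h i hi hbot)

lemma componentSum_mono {S S' : Set ι} (h : S ⊆ S') : componentSum ℳ S ≤ componentSum ℳ S' :=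
  biSup_mono h

lemma componentSum_congr {S S' : Set ι} (h : ∀ i, ℳ i ≠ ⊥ → (i ∈ S ↔ i ∈ S')) :
    componentSum ℳ S = componentSum ℳ S' :=
  le_antisymm (componentSum_le_of_ne_bot fun i hi hbot => (h i hbot).1 hi)
    (componentSum_le_of_ne_bot fun i hi hbot => (h i hbot).2 hi)

lemma componentSum_extend {ι' : Type*} {f : ι → ι'} (hf : Function.Injective f) (S : Set ι') :
    componentSum (Function.extend f ℳ ⊥) S = componentSum ℳ (f ⁻¹' S) := by
  refine le_antisymm (componentSum_le fun j hj => ?_) (componentSum_le fun i hi => ?_)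
  · by_cases hrange : ∃ i, f i = j
    · obtain ⟨i, rfl⟩ := hrange
      rw [hf.extend_apply]
      exact fun x => mem_componentSum_of_mem (S := f ⁻¹' S) hj
    · rw [Function.extend_apply' _ _ _ hrange]
      exact bot_le
  · rw [← hf.extend_apply ℳ ⊥ i]
    exact fun x => mem_componentSum_of_mem (S := S) hi

lemma exists_add_of_mem_componentSum_union {S S' : Set ι} {x : M}
    (hx : x ∈ componentSum ℳ (S ∪ S')) :
    ∃ y ∈ componentSum ℳ S, ∃ z ∈ componentSum ℳ S', y + z = x := by
  rw [componentSum, iSup_union] at hx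
  exact Submodule.mem_sup.1 hx

variable [DecidableEq ι] [Decomposition ℳ]

variable (ℳ) in
/-- The projection of a graded module onto its component of degree `i`, as an endomorphism. -/
def gradedProj (i : ι) : M →ₗ[R] M :=
  (ℳ i).subtype ∘ₗ DirectSum.component R ι (fun i => ℳ i) i ∘ₗ
    (decomposeLinearEquiv ℳ).toLinearMap

variable (ℳ) in
lemma gradedProj_mem (i : ι) (x : M) : gradedProj ℳ i x ∈ ℳ i :=
  (decompose ℳ x i).2

lemma gradedProj_of_mem {i : ι} {x : M} (hx : x ∈ ℳ i) : gradedProj ℳ i x = x :=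
  decompose_of_mem_same ℳ hx

lemma gradedProj_of_mem_ne {i j : ι} {x : M} (hx : x ∈ ℳ i) (hij : i ≠ j) :
    gradedProj ℳ j x = 0 :=
  decompose_of_mem_ne ℳ hx hij

variable (ℳ) in
lemma sum_gradedProj (x : M) : ∑ i ∈ (decompose ℳ x).support, gradedProj ℳ i x = x :=
  sum_support_decompose ℳ x

lemma eq_zero_of_forall_gradedProj {x : M} (h : ∀ i, gradedProj ℳ i x = 0) : x = 0 := by
  rw [← sum_gradedProj ℳ x]
  exact Finset.sum_eq_zero fun i _ => h i

lemma mem_componentSum_iff {S : Set ι} {x : M} :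
    x ∈ componentSum ℳ S ↔ ∀ i ∉ S, gradedProj ℳ i x = 0 := by
  refine ⟨fun hx i hi => ?_, fun h => ?_⟩
  · have hker : componentSum ℳ S ≤ LinearMap.ker (gradedProj ℳ i) :=
      componentSum_le fun j hj y hy => gradedProj_of_mem_ne hy (ne_of_mem_of_not_mem hj hi)
    exact hker hx
  · rw [← sum_gradedProj ℳ x]
    refine sum_mem fun i _ => ?_
    by_cases hi : i ∈ S
    · exact mem_componentSum_of_mem hi (gradedProj_mem ℳ i x)
    · rw [h i hi]
      exact zero_mem _

variable (ℳ) in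
lemma mem_componentSum_univ (x : M) : x ∈ componentSum ℳ Set.univ :=
  mem_componentSum_iff.2 fun _ hi => absurd (Set.mem_univ _) hi

variable (ℳ) in
lemma isCompl_componentSum_compl (S : Set ι) : IsCompl (componentSum ℳ S) (componentSum ℳ Sᶜ) := by
  refine ⟨Submodule.disjoint_def.2 fun x hx hx' =>
    eq_zero_of_forall_gradedProj (ℳ := ℳ) fun i => ?_,
    Submodule.codisjoint_iff_exists_add_eq.2 fun x => ?_⟩
  · by_cases hi : i ∈ S
    · exact mem_componentSum_iff.1 hx' i (not_not.2 hi)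
    · exact mem_componentSum_iff.1 hx i hi
  · obtain ⟨y, hy, z, hz, hyz⟩ := exists_add_of_mem_componentSum_union
      ((Set.union_compl_self S).symm ▸ mem_componentSum_univ ℳ x)
    exact ⟨y, z, hy, hz, hyz⟩

end Components

lemma isInternal_extend {ι ι' R M : Type*} [DecidableEq ι] [DecidableEq ι'] [Ring R]
    [AddCommGroup M] [Module R M] {ℳ : ι → Submodule R M} (hℳ : DirectSum.IsInternal ℳ)
    {f : ι → ι'} (hf : Function.Injective f) : DirectSum.IsInternal (Function.extend f ℳ ⊥) := by
  rw [DirectSum.isInternal_submodule_iff_iSupIndep_and_iSup_eq_top] at hℳ ⊢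
  refine ⟨fun j => ?_, (iSup_extend_bot hf ℳ).trans hℳ.2⟩
  by_cases hrange : ∃ i, f i = j
  · obtain ⟨i, rfl⟩ := hrange
    rw [hf.extend_apply]
    refine (hℳ.1 i).mono_right ((componentSum_extend hf {j | j ≠ f i}).trans_le ?_)
    exact componentSum_mono fun i' => ne_of_apply_ne f
  · rw [Function.extend_apply' _ _ _ hrange]
    exact disjoint_bot_left

section GradedLieAlgebra

variable {ι R L : Type*} [AddCommGroup ι] [CommRing R] [LieRing L] [LieAlgebra R L]
  {ℒ : ι → Submodule R L}

lemma lie_mem_componentSum [SetLike.GradedBracket ℒ] {S S' S'' : Set ι}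
    (h : ∀ c ∈ S, ∀ d ∈ S', ℒ (c + d) ≠ ⊥ → c + d ∈ S'') {x y : L}
    (hx : x ∈ componentSum ℒ S) (hy : y ∈ componentSum ℒ S') : ⁅x, y⁆ ∈ componentSum ℒ S'' := by
  have homogeneous {c d : ι} (hc : c ∈ S) (hd : d ∈ S') {x y : L} (hx : x ∈ ℒ c) (hy : y ∈ ℒ d) :
      ⁅x, y⁆ ∈ componentSum ℒ S'' := by
    have hxy := SetLike.GradedBracket.bracket_mem (ℒ := ℒ) hx hy
    by_cases hbot : ℒ (c + d) = ⊥
    · rw [(Submodule.eq_bot_iff _).1 hbot _ hxy]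
      exact zero_mem _
    · exact mem_componentSum_of_mem (h c hc d hd hbot) hxy
  have right {d : ι} (hd : d ∈ S') {y : L} (hy : y ∈ ℒ d) : ⁅y, x⁆ ∈ componentSum ℒ S'' :=
    componentSum_le (p := (componentSum ℒ S'').comap (ad R L y)) (fun c hc x hx => by
      rw [Submodule.mem_comap, ad_apply, ← lie_skew]
      exact neg_mem (homogeneous hc hd hx hy)) hx
  refine componentSum_le (p := (componentSum ℒ S'').comap (ad R L x)) (fun d hd y hy => ?_) hy
  rw [Submodule.mem_comap, ad_apply, ← lie_skew]
  exact neg_mem (right hd hy)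

variable [DecidableEq ι] [GradedLieAlgebra ℒ]

lemma gradedProj_lie {c : ι} {x : L} (hx : x ∈ ℒ c) (d : ι) (y : L) :
    gradedProj ℒ (c + d) ⁅x, y⁆ = ⁅x, gradedProj ℒ d y⁆ := by
  conv_lhs => rw [← sum_gradedProj ℒ y, lie_sum, map_sum]
  conv_rhs => rw [← sum_gradedProj ℒ y, map_sum, lie_sum]
  refine Finset.sum_congr rfl fun e _ => ?_
  have he := gradedProj_mem ℒ e y
  by_cases hed : e = d
  · subst hed
    rw [gradedProj_of_mem he, gradedProj_of_mem (SetLike.GradedBracket.bracket_mem hx he)]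
  · rw [gradedProj_of_mem_ne he hed, lie_zero,
      gradedProj_of_mem_ne (SetLike.GradedBracket.bracket_mem hx he) (by simpa using hed)]

variable (R) in
lemma lie_mem_lieSpan_of_forall_lie_mem {P : LieSubalgebra R L} {s : Set L}
    (hs : ∀ x ∈ s, ∀ z : L, ⁅z, x⁆ ∈ LieSubmodule.lieSpan R P s) {y : L}
    (hy : y ∈ LieSubmodule.lieSpan R P s) (z : L) : ⁅z, y⁆ ∈ LieSubmodule.lieSpan R P s := by
  induction hy using LieSubmodule.lieSpan_induction generalizing z with
  | mem x hx => exact hs x hx z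
  | zero => rw [lie_zero]; exact zero_mem _
  | smul a y _ ih => rw [lie_smul]; exact SMulMemClass.smul_mem a (ih z)
  | add y y' _ _ ih ih' => rw [lie_add]; exact add_mem (ih z) (ih' z)
  | lie p y _ ih =>
    rw [LieSubalgebra.coe_bracket_of_module, leibniz_lie]
    exact add_mem (ih _) (LieSubmodule.lie_mem (x := p) _ (ih z))

variable (R) in
lemma lieSpan_eq_top_of_forall_lie_mem [IsSimple R L] {P : LieSubalgebra R L} {x : L}
    (hx : x ≠ 0) (h : ∀ z : L, ⁅z, x⁆ ∈ LieSubmodule.lieSpan R P {x}) :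
    LieSubmodule.lieSpan R P {x} = ⊤ := by
  let I : LieIdeal R L :=
    { (LieSubmodule.lieSpan R P {x} : Submodule R L) with
      lie_mem := fun {z _} hy => lie_mem_lieSpan_of_forall_lie_mem R (by simpa using h) hy z }
  have hxI : x ∈ I := LieSubmodule.subset_lieSpan rfl
  have hI : I = ⊤ := (IsSimple.eq_bot_or_eq_top I).resolve_left fun hI =>
    hx ((LieSubmodule.mem_bot x).1 (hI ▸ hxI))
  rw [eq_top_iff]
  intro y _
  exact (hI ▸ LieSubmodule.mem_top y : y ∈ I)

variable (ℒ) in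
/-- The subalgebra spanned by the components on which the additive functional `d` is nonpositive. -/
def nonposSubalgebra (d : ι →+ ℤ) : LieSubalgebra R L where
  __ := componentSum ℒ {c | d c ≤ 0}
  lie_mem' := lie_mem_componentSum fun a (ha : d a ≤ 0) b (hb : d b ≤ 0) _ =>
    show d (a + b) ≤ 0 by rw [map_add]; omega

variable (ℒ) in
/-- The sum of the components on which the additive functional `d` is at most `n`, as a module over
the subalgebra of nonpositive degree. -/
def degreeLESubmodule (d : ι →+ ℤ) (n : ℤ) : LieSubmodule R (nonposSubalgebra ℒ d) L where
  __ := componentSum ℒ {c | d c ≤ n}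
  lie_mem {z _} hy := lie_mem_componentSum (fun a (ha : d a ≤ 0) b (hb : d b ≤ n) _ =>
    show d (a + b) ≤ n by rw [map_add]; omega) z.2 hy

lemma eq_bot_of_lie_eq_zero [IsSimple R L] (d : ι →+ ℤ) {δ : ι} {x : L} (hx : x ∈ ℒ δ)
    (hx0 : x ≠ 0) (h : ∀ γ, 0 < d γ → ∀ z ∈ ℒ γ, ⁅x, z⁆ = 0) {γ : ι} (hγ : d δ < d γ) :
    ℒ γ = ⊥ := by
  have hpos {z : L} (hz : z ∈ componentSum ℒ {c | 0 < d c}) : ⁅z, x⁆ = 0 := by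
    have hxz : z ∈ LinearMap.ker (ad R L x) := componentSum_le (fun c hc z hz => h c hc z hz) hz
    rw [← lie_skew, ← ad_apply R, LinearMap.mem_ker.1 hxz, neg_zero]
  have hspan : LieSubmodule.lieSpan R (nonposSubalgebra ℒ d) {x} = ⊤ := by
    refine lieSpan_eq_top_of_forall_lie_mem R hx0 fun z => ?_
    have hcover : {c | 0 < d c} ∪ {c | d c ≤ 0} = (Set.univ : Set ι) :=
      Set.eq_univ_of_forall fun c => lt_or_ge 0 (d c)
    obtain ⟨a, ha, b, hb, rfl⟩ :=
      exists_add_of_mem_componentSum_union (hcover ▸ mem_componentSum_univ ℒ z)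
    rw [add_lie, hpos ha, zero_add]
    exact LieSubmodule.lie_mem (x := (⟨b, hb⟩ : nonposSubalgebra ℒ d)) _
      (LieSubmodule.subset_lieSpan rfl)
  have hle : LieSubmodule.lieSpan R (nonposSubalgebra ℒ d) {x} ≤ degreeLESubmodule ℒ d (d δ) := by
    refine LieSubmodule.lieSpan_le.2 (Set.singleton_subset_iff.2 ?_)
    exact mem_componentSum_of_mem (S := {c | d c ≤ d δ}) (le_refl (d δ)) hx
  refine (Submodule.eq_bot_iff _).2 fun y hy => ?_
  have hyle : y ∈ componentSum ℒ {c | d c ≤ d δ} := hle (hspan ▸ LieSubmodule.mem_top y)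
  rw [← gradedProj_of_mem hy]
  exact mem_componentSum_iff.1 hyle γ (not_le.2 hγ)

end GradedLieAlgebra

section GradedLieAlgebraOverField

open DirectSum

variable {ι K L : Type*} [DecidableEq ι] [AddCommGroup ι] [Field K] [LieRing L]
  [LieAlgebra K L] {ℒ : ι → Submodule K L} [GradedLieAlgebra ℒ]

lemma exists_eq_smul_of_finrank_eq_one {V : Submodule K L} (hV : finrank K V = 1) {x y : L}
    (hx : x ∈ V) (hx0 : x ≠ 0) (hy : y ∈ V) : ∃ a : K, y = a • x := by
  obtain ⟨a, ha⟩ := (finrank_eq_one_iff_of_nonzero' (⟨x, hx⟩ : V) (by simpa using hx0)).1 hV ⟨y, hy⟩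
  exact ⟨a, (congrArg Subtype.val ha).symm⟩

lemma lie_ne_zero_of_unique_raising [IsSimple K L] (d : ι →+ ℤ) {δ ε : ι} {x y : L}
    (hx : x ∈ ℒ δ) (hx0 : x ≠ 0) (hy : y ∈ ℒ ε) (hy0 : y ≠ 0) (hε : finrank K (ℒ ε) = 1)
    (hunique : ∀ γ, 0 < d γ → ℒ γ ≠ ⊥ → ℒ (γ + δ) ≠ ⊥ → γ = ε)
    {γ₀ : ι} (hlt : d δ < d γ₀) (hγ₀ : ℒ γ₀ ≠ ⊥) : ⁅x, y⁆ ≠ 0 := by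
  intro hxy
  refine hγ₀ (eq_bot_of_lie_eq_zero d hx hx0 (fun γ hγ z hz => ?_) hlt)
  by_contra hxz
  have hz0 : z ≠ 0 := by
    rintro rfl
    exact hxz (lie_zero x)
  have hzx : ⁅z, x⁆ ≠ 0 := by rwa [← lie_skew, neg_ne_zero]
  obtain rfl := hunique γ hγ ((Submodule.ne_bot_iff _).2 ⟨z, hz, hz0⟩)
    ((Submodule.ne_bot_iff _).2 ⟨_, SetLike.GradedBracket.bracket_mem hz hx, hzx⟩)
  obtain ⟨a, rfl⟩ := exists_eq_smul_of_finrank_eq_one hε hy hy0 hz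
  exact hxz (by rw [lie_smul, hxy, smul_zero])

variable [FiniteDimensional K L]

lemma killingForm_eq_zero_of_add_ne_zero {c d : ι} (h : c + d ≠ 0) {x y : L} (hx : x ∈ ℒ c)
    (hy : y ∈ ℒ d) : killingForm K L x y = 0 := by
  rw [killingForm_apply_apply]
  refine LinearMap.trace_eq_zero_of_mapsTo_ne (Decomposition.isInternal ℒ) (fun e => c + (d + e))
    (fun e => ?_) fun e z hz => ?_
  · rwa [← add_assoc, Ne, add_eq_right]
  · exact SetLike.GradedBracket.bracket_mem hx (SetLike.GradedBracket.bracket_mem hy hz)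

lemma killingForm_eq_zero_of_mem_componentSum {S S' : Set ι}
    (h : ∀ c ∈ S, ∀ d ∈ S', c + d ≠ 0) {x y : L} (hx : x ∈ componentSum ℒ S)
    (hy : y ∈ componentSum ℒ S') : killingForm K L x y = 0 := by
  have hleft : componentSum ℒ S ≤ LinearMap.ker ((killingForm K L).flip y) :=
    componentSum_le fun c hc x hx =>
      componentSum_le (p := LinearMap.ker (killingForm K L x))
        (fun d hd y hy => killingForm_eq_zero_of_add_ne_zero (h c hc d hd) hx hy) hy
  exact hleft hx

lemma isNilpotent_ad_of_mem_componentSum (h : ι →+ ℤ) {x : L}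
    (hx : x ∈ componentSum ℒ {c | 0 < h c}) : IsNilpotent (ad K L x) := by
  have hfin : {c | ℒ c ≠ ⊥}.Finite := WellFoundedGT.finite_ne_bot_of_iSupIndep
    (Decomposition.isInternal ℒ).submodule_iSupIndep
  obtain ⟨M, hM⟩ := (hfin.image fun c => |h c|).bddAbove
  have hbound {c : ι} (hc : ℒ c ≠ ⊥) : |h c| ≤ M := hM ⟨c, hc, rfl⟩
  have raise (n : ℕ) (y : L) : (ad K L x ^ n) y ∈ componentSum ℒ {c | -M + n ≤ h c} := by
    induction n with
    | zero =>
      refine mem_componentSum_iff.2 fun c hc => ?_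
      by_contra hy
      have hc' := hbound ((Submodule.ne_bot_iff _).2 ⟨_, gradedProj_mem ℒ c _, hy⟩)
      exact hc (by simpa using neg_le_of_abs_le hc')
    | succ n ih =>
      rw [pow_succ', Module.End.mul_apply, ad_apply]
      refine lie_mem_componentSum (fun c hc d hd _ => ?_) hx ih
      simp only [Set.mem_ofPred_eq, map_add, Nat.cast_add, Nat.cast_one] at hc hd ⊢
      omega
  refine ⟨(2 * M + 1).toNat, LinearMap.ext fun y => ?_⟩
  refine (Submodule.mem_bot K).1 (componentSum_le (fun c hc => ?_) (raise _ y))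
  by_contra hbot
  have hcM := le_of_abs_le (hbound fun h0 => hbot h0.le)
  simp only [Set.mem_ofPred_eq] at hc
  omega

end GradedLieAlgebraOverField

section NilpotentExponential

variable {V : Type*} [AddCommGroup V] [Module ℂ V]

lemma nilExp_eq_exp [Module ℚ V] [FiniteDimensional ℂ V] {f : End ℂ V} (hf : IsNilpotent f) :
    nilExp f = IsNilpotent.exp f := by
  have hpow : f ^ (finrank ℂ V + 1) = 0 := by
    obtain ⟨n, hn⟩ := hf
    have hker := End.ker_pow_le_ker_pow_finrank f n
    rw [hn, LinearMap.ker_zero, top_le_iff, LinearMap.ker_eq_top] at hker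
    rw [pow_succ, hker, zero_mul]
  rw [IsNilpotent.exp_eq_sum hpow, nilExp]
  refine Finset.sum_congr rfl fun i _ => ?_
  rw [← Rat.cast_smul_eq_qsmul ℂ, Rat.cast_inv, Rat.cast_natCast]

lemma nilExp_mem {f : End ℂ V} {p : Submodule ℂ V} (h : ∀ v ∈ p, f v ∈ p) {v : V} (hv : v ∈ p) :
    nilExp f v ∈ p := by
  rw [nilExp, LinearMap.sum_apply]
  refine sum_mem fun i _ => p.smul_mem _ ?_
  exact Module.End.pow_apply_mem_of_forall_mem i h v hv

variable [FiniteDimensional ℂ V]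

lemma nilExp_mem_iff {f : End ℂ V} (hf : IsNilpotent f) {p : Submodule ℂ V}
    (h : ∀ v ∈ p, f v ∈ p) {v : V} : nilExp f v ∈ p ↔ v ∈ p := by
  let : Module ℚ V := Module.compHom V (algebraMap ℚ ℂ)
  refine ⟨fun hv => ?_, nilExp_mem h⟩
  have hinv := nilExp_mem (f := -f) (fun v hv => neg_mem (h v hv)) hv
  rwa [nilExp_eq_exp hf.neg, nilExp_eq_exp hf, ← Module.End.mul_apply,
    IsNilpotent.exp_neg_mul_exp_self hf, Module.End.one_apply] at hinv

lemma nilExp_apply_of_intertwines {W : Type*} [AddCommGroup W] [Module ℂ W] [Module ℚ W]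
    {f : End ℂ V} (hf : IsNilpotent f) {f' : End ℂ W} (hf' : IsNilpotent f') {g : W →ₗ[ℂ] V}
    (h : f ∘ₗ g = g ∘ₗ f') (w : W) : nilExp f (g w) = g (IsNilpotent.exp f' w) := by
  let : Module ℚ V := Module.compHom V (algebraMap ℚ ℂ)
  rw [nilExp_eq_exp hf]
  exact LinearMap.congr_fun (Module.End.commute_exp_left_of_commute hf' hf h) w

lemma exists_lieEquiv_eq_nilExp_ad {L : Type*} [LieRing L] [LieAlgebra ℂ L]
    [FiniteDimensional ℂ L] {x : L} (hx : IsNilpotent (ad ℂ L x)) :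
    ∃ e : L ≃ₗ⁅ℂ⁆ L, ∀ y, e y = nilExp (ad ℂ L x) y := by
  let : Module ℚ L := Module.compHom L (algebraMap ℚ ℂ)
  let : LieAlgebra ℚ L := { lie_smul := fun q => lie_smul (algebraMap ℚ ℂ q) }
  let D : LieDerivation ℂ L L := LieDerivation.ad ℂ L x
  have hDx : D.toLinearMap = ad ℂ L x := by
    ext y
    simp [D]
  have hD : IsNilpotent D.toLinearMap := by rwa [hDx]
  exact ⟨LieDerivation.exp D hD, fun y => by
    rw [LieDerivation.exp_map_apply, hDx, nilExp_eq_exp hx]⟩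

end NilpotentExponential

section ZariskiTopology

/-- The algebra of polynomial functions on a complex vector space. -/
abbrev polyFunctions (V : Type*) [AddCommGroup V] [Module ℂ V] : Subalgebra ℂ (V → ℂ) :=
  Algebra.adjoin ℂ (Set.range fun l : Module.Dual ℂ V => (l : V → ℂ))

variable {V : Type*} [AddCommGroup V] [Module ℂ V]

lemma coe_mem_polyFunctions (l : Module.Dual ℂ V) :
    (l : V → ℂ) ∈ polyFunctions V :=
  Algebra.subset_adjoin ⟨l, rfl⟩

lemma exists_polynomial_eval_eq_on_line {p : V → ℂ} (hp : p ∈ polyFunctions V) (a b : V) :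
    ∃ P : Polynomial ℂ, ∀ z : ℂ, p (a + z • (b - a)) = P.eval z := by
  induction hp using Algebra.adjoin_induction with
  | mem x hx =>
    obtain ⟨l, rfl⟩ := hx
    refine ⟨Polynomial.C (l a) + Polynomial.X * Polynomial.C (l (b - a)), fun z => ?_⟩
    simp only [map_add, map_smul, smul_eq_mul, Polynomial.eval_add, Polynomial.eval_mul,
      Polynomial.eval_C, Polynomial.eval_X]
  | algebraMap r => exact ⟨Polynomial.C r, fun z => by rw [Polynomial.eval_C]; rfl⟩
  | add x y _ _ hx hy =>
    obtain ⟨P, hP⟩ := hx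
    obtain ⟨Q, hQ⟩ := hy
    exact ⟨P + Q, fun z => by rw [Pi.add_apply, hP, hQ, Polynomial.eval_add]⟩
  | mul x y _ _ hx hy =>
    obtain ⟨P, hP⟩ := hx
    obtain ⟨Q, hQ⟩ := hy
    exact ⟨P * Q, fun z => by rw [Pi.mul_apply, hP, hQ, Polynomial.eval_mul]⟩

lemma exists_apply_ne_zero_and_apply_ne_zero {p q : V → ℂ} (hp : p ∈ polyFunctions V)
    (hq : q ∈ polyFunctions V) {a b : V} (ha : p a ≠ 0) (hb : q b ≠ 0) :
    ∃ v, p v ≠ 0 ∧ q v ≠ 0 := by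
  obtain ⟨P, hP⟩ := exists_polynomial_eval_eq_on_line hp a b
  obtain ⟨Q, hQ⟩ := exists_polynomial_eval_eq_on_line hq a b
  have hP0 : P ≠ 0 := by
    rintro rfl
    exact ha (by simpa using hP 0)
  have hQ0 : Q ≠ 0 := by
    rintro rfl
    exact hb (by simpa using hQ 1)
  obtain ⟨z, hz⟩ : ∃ z, (P * Q).eval z ≠ 0 := by
    by_contra! hzero
    exact mul_ne_zero hP0 hQ0 (Polynomial.zero_of_eval_zero _ hzero)
  rw [Polynomial.eval_mul, ← hP, ← hQ] at hz
  exact ⟨_, left_ne_zero_of_mul hz, right_ne_zero_of_mul hz⟩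

lemma zOpen_ne_zero {p : V → ℂ} (hp : p ∈ polyFunctions V) : zOpen {v | p v ≠ 0} :=
  TopologicalSpace.isOpen_generateFrom_of_mem ⟨p, hp, rfl⟩

variable (V) in
lemma isTopologicalBasis_zariskiTop :
    @TopologicalSpace.IsTopologicalBasis V (zariskiTop V)
      {U | ∃ p ∈ polyFunctions V, U = {v | p v ≠ 0}} := by
  let := zariskiTop V
  refine ⟨?_, ?_, rfl⟩
  · rintro _ ⟨p, hp, rfl⟩ _ ⟨q, hq, rfl⟩ v ⟨hpv, hqv⟩
    exact ⟨_, ⟨p * q, mul_mem hp hq, rfl⟩, mul_ne_zero hpv hqv,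
      fun w hw => ⟨left_ne_zero_of_mul hw, right_ne_zero_of_mul hw⟩⟩
  · exact Set.eq_univ_of_forall fun v => ⟨_, ⟨1, one_mem _, rfl⟩, one_ne_zero⟩

lemma zDense_ne_zero {p : V → ℂ} (hp : p ∈ polyFunctions V) {v : V} (hv : p v ≠ 0) :
    zDense {w | p w ≠ 0} := by
  let := zariskiTop V
  refine (isTopologicalBasis_zariskiTop V).dense_iff.2 ?_
  rintro _ ⟨q, hq, rfl⟩ ⟨w, hw⟩
  exact exists_apply_ne_zero_and_apply_ne_zero hq hp hw hv

end ZariskiTopology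

section TypeCRoots

variable {κ : Type*} [Fintype κ]

/-- The `ℓ¹`-norm of an integral vector. The roots of type `C`, that is `±ε_a ± ε_b` with `a ≠ b`
and `±2ε_a`, are exactly the integral vectors of norm two. -/
def l1Norm (c : κ → ℤ) : ℕ := ∑ a, (c a).natAbs

lemma sum_natAbs_le_l1Norm (c : κ → ℤ) (s : Finset κ) : ∑ a ∈ s, (c a).natAbs ≤ l1Norm c :=
  Finset.sum_le_univ_sum_of_nonneg fun _ => Nat.zero_le _

lemma natAbs_le_l1Norm (c : κ → ℤ) (a : κ) : (c a).natAbs ≤ l1Norm c := by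
  simpa using sum_natAbs_le_l1Norm c {a}

lemma natAbs_add_natAbs_le_l1Norm (c : κ → ℤ) {a b : κ} (hab : a ≠ b) :
    (c a).natAbs + (c b).natAbs ≤ l1Norm c := by
  rw [← Finset.sum_pair (f := fun a => (c a).natAbs) hab]
  exact sum_natAbs_le_l1Norm c _

lemma natAbs_add_natAbs_add_natAbs_le_l1Norm (c : κ → ℤ) {a b l : κ} (hab : a ≠ b) (hal : a ≠ l)
    (hbl : b ≠ l) : (c a).natAbs + (c b).natAbs + (c l).natAbs ≤ l1Norm c := by
  have h := sum_natAbs_le_l1Norm c {a, b, l}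
  rwa [Finset.sum_insert (by simp [hab, hal]), Finset.sum_pair hbl, ← add_assoc] at h

lemma l1Norm_neg (c : κ → ℤ) : l1Norm (-c) = l1Norm c := by
  simp only [l1Norm, Pi.neg_apply, Int.natAbs_neg]

variable [DecidableEq κ]

lemma l1Norm_eq_natAbs_add_sum (c : κ → ℤ) (a : κ) :
    l1Norm c = (c a).natAbs + ∑ b ∈ Finset.univ.erase a, (c b).natAbs :=
  (Finset.add_sum_erase _ _ (Finset.mem_univ a)).symm

/-- The standard basis vector `ε_a`. -/
abbrev eps (a : κ) : κ → ℤ := Pi.single a 1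

lemma l1Norm_single (a : κ) (u : ℤ) : l1Norm (Pi.single a u) = u.natAbs := by
  rw [l1Norm, Finset.sum_eq_single a (fun b _ hb => by rw [Pi.single_eq_of_ne hb, Int.natAbs_zero])
    (fun h => absurd (Finset.mem_univ a) h), Pi.single_eq_same]

lemma l1Norm_single_add_single {a b : κ} (hab : a ≠ b) (u v : ℤ) :
    l1Norm (Pi.single a u + Pi.single b v) = u.natAbs + v.natAbs := by
  rw [l1Norm_eq_natAbs_add_sum _ a, ← l1Norm_single b v, l1Norm_eq_natAbs_add_sum _ a]
  simp only [Pi.add_apply, Pi.single_eq_same, Pi.single_eq_of_ne hab, add_zero, Int.natAbs_zero,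
    zero_add]
  congr 1
  refine Finset.sum_congr rfl fun i hi => ?_
  rw [Pi.single_eq_of_ne (Finset.ne_of_mem_erase hi), zero_add]

lemma l1Norm_eps_sub_eps {a b : κ} (hab : a ≠ b) : l1Norm (eps a - eps b) = 2 := by
  rw [sub_eq_add_neg, ← Pi.single_neg, l1Norm_single_add_single hab]
  rfl

lemma l1Norm_neg_eps_sub_eps (a b : κ) : l1Norm (-eps a - eps b) = 2 := by
  rw [← neg_add', l1Norm_neg]
  rcases eq_or_ne a b with rfl | hab
  · rw [← Pi.single_add, l1Norm_single]
    rfl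
  · rw [l1Norm_single_add_single hab]
    rfl

lemma eq_single_of_l1Norm_le_natAbs {c : κ → ℤ} {a : κ} (h : l1Norm c ≤ (c a).natAbs) :
    c = Pi.single a (c a) := by
  funext b
  rcases eq_or_ne b a with rfl | hb
  · rw [Pi.single_eq_same]
  · have := natAbs_add_natAbs_le_l1Norm c hb
    rw [Pi.single_eq_of_ne hb]
    omega

lemma eq_single_add_single_of_l1Norm_le {c : κ → ℤ} {a b : κ} (hab : a ≠ b)
    (h : l1Norm c ≤ (c a).natAbs + (c b).natAbs) : c = Pi.single a (c a) + Pi.single b (c b) := by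
  funext l
  rcases eq_or_ne l a with rfl | hla
  · rw [Pi.add_apply, Pi.single_eq_same, Pi.single_eq_of_ne hab, add_zero]
  rcases eq_or_ne l b with rfl | hlb
  · rw [Pi.add_apply, Pi.single_eq_same, Pi.single_eq_of_ne hla, zero_add]
  · have := natAbs_add_natAbs_add_natAbs_le_l1Norm c hab hla.symm hlb.symm
    rw [Pi.add_apply, Pi.single_eq_of_ne hla, Pi.single_eq_of_ne hlb]
    omega

lemma exists_eq_single_add_single_of_natAbs_eq_one {c : κ → ℤ} (hc : l1Norm c = 2) {a : κ}
    (ha : (c a).natAbs = 1) :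
    ∃ b, a ≠ b ∧ ∃ v : ℤ, v.natAbs = 1 ∧ c = Pi.single a (c a) + Pi.single b v := by
  have hsum := l1Norm_eq_natAbs_add_sum c a
  obtain ⟨b, hb, hcb⟩ : ∃ b ∈ Finset.univ.erase a, (c b).natAbs ≠ 0 :=
    Finset.exists_ne_zero_of_sum_ne_zero (by omega)
  have hab := (Finset.ne_of_mem_erase hb).symm
  have hle := natAbs_add_natAbs_le_l1Norm c hab
  exact ⟨b, hab, c b, by omega, eq_single_add_single_of_l1Norm_le hab (by omega)⟩

lemma exists_eq_single_add_single_of_l1Norm_eq_two {c : κ → ℤ} (hc : l1Norm c = 2) :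
    ∃ a b, ∃ u v : ℤ, u.natAbs = 1 ∧ v.natAbs = 1 ∧ c = Pi.single a u + Pi.single b v := by
  obtain ⟨a, -, ha⟩ : ∃ a ∈ Finset.univ, (c a).natAbs ≠ 0 :=
    Finset.exists_ne_zero_of_sum_ne_zero (hc.trans_ne two_ne_zero)
  have hle := natAbs_le_l1Norm c a
  obtain h1 | h2 : (c a).natAbs = 1 ∨ (c a).natAbs = 2 := by omega
  · obtain ⟨b, -, v, hv, hcv⟩ := exists_eq_single_add_single_of_natAbs_eq_one hc h1
    exact ⟨a, b, c a, v, h1, hv, hcv⟩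
  · obtain ⟨u, hu⟩ : ∃ u, c a = u + u := ⟨c a / 2, by omega⟩
    refine ⟨a, a, u, u, by omega, by omega, ?_⟩
    rw [← Pi.single_add, ← hu]
    exact eq_single_of_l1Norm_le_natAbs (by omega)

end TypeCRoots

section TypeCGrading

variable {κ K L : Type*} [Fintype κ] [Field K] [LieRing L] [LieAlgebra K L]

/-- The grading `ℒ` by integral weights has the roots of type `C` as its nonzero weights, each of
multiplicity one. -/
structure IsTypeCGrading (ℒ : (κ → ℤ) → Submodule K L) : Prop where
  eq_bot : ∀ c, c ≠ 0 → l1Norm c ≠ 2 → ℒ c = ⊥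
  finrank_eq_one : ∀ c, l1Norm c = 2 → finrank K (ℒ c) = 1

namespace IsTypeCGrading

variable {ℒ : (κ → ℤ) → Submodule K L} (hℒ : IsTypeCGrading ℒ)
include hℒ

lemma l1Norm_le_two {c : κ → ℤ} (hc : ℒ c ≠ ⊥) : l1Norm c ≤ 2 := by
  by_contra! h
  refine hc (hℒ.eq_bot c ?_ h.ne')
  rintro rfl
  simp [l1Norm] at h

lemma eq_zero_of_two_lt {c : κ → ℤ} (hc : 2 < l1Norm c) {x : L} (hx : x ∈ ℒ c) : x = 0 := by
  by_contra hx0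
  exact hc.not_ge (hℒ.l1Norm_le_two ((Submodule.ne_bot_iff _).2 ⟨x, hx, hx0⟩))

lemma exists_ne_zero {c : κ → ℤ} (hc : l1Norm c = 2) : ∃ x ∈ ℒ c, x ≠ 0 := by
  rw [← Submodule.ne_bot_iff]
  intro hbot
  have h := hℒ.finrank_eq_one c hc
  rw [hbot, finrank_bot] at h
  exact zero_ne_one h

lemma ne_bot {c : κ → ℤ} (hc : l1Norm c = 2) : ℒ c ≠ ⊥ :=
  (Submodule.ne_bot_iff _).2 (hℒ.exists_ne_zero hc)

variable [DecidableEq κ] [GradedLieAlgebra ℒ] [IsSimple K L]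

lemma lie_ne_zero_of_short_add_short {i j : κ} (hij : i ≠ j) {s t : ℤ} (hs : s.natAbs = 1)
    (ht : t.natAbs = 1) {x y : L} (hx : x ∈ ℒ (Pi.single i s + Pi.single j t)) (hx0 : x ≠ 0)
    (hy : y ∈ ℒ (Pi.single i s + Pi.single j (-t))) (hy0 : y ≠ 0) : ⁅x, y⁆ ≠ 0 := by
  let d : (κ → ℤ) →+ ℤ := (AddMonoidHom.mulLeft s).comp (Pi.evalAddMonoidHom _ i)
  have hd (γ : κ → ℤ) : d γ = s * γ i := rfl
  have hs' : s = 1 ∨ s = -1 := by omega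
  refine lie_ne_zero_of_unique_raising d hx hx0 hy hy0
    (hℒ.finrank_eq_one _ (by rw [l1Norm_single_add_single hij]; omega)) (fun γ hγ _ h => ?_)
    (γ₀ := Pi.single i (s + s)) ?_ (hℒ.ne_bot (by rw [l1Norm_single]; omega))
  · have hle := hℒ.l1Norm_le_two h
    have hi : (γ + (Pi.single i s + Pi.single j t) : κ → ℤ) i = γ i + s := by simp [hij]
    have hile := natAbs_le_l1Norm (γ + (Pi.single i s + Pi.single j t)) i
    have hγi : γ i = s := by
      rw [hd] at hγ
      rcases hs' with rfl | rfl <;> omega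
    have hγ_add := eq_single_of_l1Norm_le_natAbs (c := γ + (Pi.single i s + Pi.single j t)) (a := i)
      (by omega)
    rw [eq_sub_of_add_eq hγ_add, hi, hγi, Pi.single_add, Pi.single_neg]
    abel
  · rw [hd, hd, Pi.single_eq_same, Pi.add_apply, Pi.single_eq_same, Pi.single_eq_of_ne hij]
    rcases hs' with rfl | rfl <;> norm_num

lemma lie_ne_zero_of_long_add_short {i j : κ} (hij : i ≠ j) {s t : ℤ} (hs : s.natAbs = 1)
    (ht : t.natAbs = 1) {x y : L} (hx : x ∈ ℒ (Pi.single i (s + s))) (hx0 : x ≠ 0)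
    (hy : y ∈ ℒ (Pi.single i (-s) + Pi.single j t)) (hy0 : y ≠ 0) : ⁅x, y⁆ ≠ 0 := by
  let d : (κ → ℤ) →+ ℤ := (AddMonoidHom.mulLeft t).comp (Pi.evalAddMonoidHom _ j)
  have hd (γ : κ → ℤ) : d γ = t * γ j := rfl
  have ht' : t = 1 ∨ t = -1 := by omega
  refine lie_ne_zero_of_unique_raising d hx hx0 hy hy0
    (hℒ.finrank_eq_one _ (by rw [l1Norm_single_add_single hij]; omega)) (fun γ hγ h h' => ?_)
    (γ₀ := Pi.single j (t + t)) ?_ (hℒ.ne_bot (by rw [l1Norm_single]; omega))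
  · have hle := hℒ.l1Norm_le_two h
    have hle' := hℒ.l1Norm_le_two h'
    have hγ_le := natAbs_add_natAbs_le_l1Norm γ hij
    have hadd_le := natAbs_add_natAbs_le_l1Norm (γ + Pi.single i (s + s)) hij
    rw [Pi.add_apply, Pi.add_apply, Pi.single_eq_same, Pi.single_eq_of_ne hij.symm] at hadd_le
    have hγj : γ j = t := by
      rw [hd] at hγ
      rcases ht' with rfl | rfl <;> omega
    have hγi : γ i = -s := by omega
    rw [eq_single_add_single_of_l1Norm_le hij (c := γ) (by omega), hγi, hγj]
  · rw [hd, hd, Pi.single_eq_same, Pi.single_eq_of_ne hij.symm]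
    rcases ht' with rfl | rfl <;> norm_num

lemma lie_ne_zero_of_short_add_short_disjoint {i j l : κ} (hij : i ≠ j) (hil : i ≠ l) (hjl : j ≠ l)
    {s t u : ℤ} (hs : s.natAbs = 1) (ht : t.natAbs = 1) (hu : u.natAbs = 1) {x y : L}
    (hx : x ∈ ℒ (Pi.single i (-s) + Pi.single l u)) (hx0 : x ≠ 0)
    (hy : y ∈ ℒ (Pi.single i s + Pi.single j t)) (hy0 : y ≠ 0) : ⁅x, y⁆ ≠ 0 := by
  intro hxy
  obtain ⟨w, hw, hw0⟩ := hℒ.exists_ne_zero (c := Pi.single j (-t + -t))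
    (by rw [l1Norm_single]; omega)
  have hwy0 : ⁅w, y⁆ ≠ 0 := hℒ.lie_ne_zero_of_long_add_short hij.symm (by omega) hs hw hw0
    (by rwa [neg_neg, add_comm]) hy0
  have hwy : ⁅w, y⁆ ∈ ℒ (Pi.single i s + Pi.single j (-t)) := by
    convert SetLike.GradedBracket.bracket_mem hw hy using 2
    rw [Pi.single_add, Pi.single_neg]
    abel
  have hywy0 : ⁅y, ⁅w, y⁆⁆ ≠ 0 :=
    hℒ.lie_ne_zero_of_short_add_short hij hs ht hy hy0 hwy hwy0
  have hywy : ⁅y, ⁅w, y⁆⁆ ∈ ℒ (Pi.single i (s + s)) := by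
    convert SetLike.GradedBracket.bracket_mem hy hwy using 2
    rw [Pi.single_add, Pi.single_neg]
    abel
  have hxw : ⁅x, w⁆ = 0 := by
    refine hℒ.eq_zero_of_two_lt ?_ (SetLike.GradedBracket.bracket_mem hx hw)
    refine lt_of_lt_of_le ?_ (natAbs_add_natAbs_add_natAbs_le_l1Norm _ hij hil hjl)
    simp only [Pi.add_apply, Pi.single_eq_same, Pi.single_eq_of_ne hij, Pi.single_eq_of_ne hil,
      Pi.single_eq_of_ne hjl, Pi.single_eq_of_ne hij.symm, Pi.single_eq_of_ne hil.symm,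
      Pi.single_eq_of_ne hjl.symm]
    omega
  refine hℒ.lie_ne_zero_of_long_add_short hil hs hu hywy hywy0 hx hx0 ?_
  rw [← lie_skew, leibniz_lie x, hxy, zero_lie, leibniz_lie x, hxw, hxy, zero_lie, lie_zero,
    add_zero, lie_zero, add_zero, neg_zero]

omit [DecidableEq κ] in
lemma lie_ne_zero_of_natAbs_eq_two {c d : κ → ℤ} (hc : l1Norm c = 2) (hd : l1Norm d = 2)
    (hcd : l1Norm (c + d) = 2) {i : κ} (hi : (c i + d i).natAbs < (c i).natAbs + (d i).natAbs)
    (hci : (c i).natAbs = 2) {x y : L} (hx : x ∈ ℒ c) (hx0 : x ≠ 0) (hy : y ∈ ℒ d) (hy0 : y ≠ 0) :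
    ⁅x, y⁆ ≠ 0 := by
  have hdi := natAbs_le_l1Norm d i
  have hc_eq := eq_single_of_l1Norm_le_natAbs (c := c) (a := i) (by omega)
  have hdi1 : (d i).natAbs = 1 := by
    by_contra h1
    have hd_eq := eq_single_of_l1Norm_le_natAbs (c := d) (a := i) (by omega)
    rw [hc_eq, hd_eq, ← Pi.single_add, l1Norm_single] at hcd
    omega
  obtain ⟨j, hij, t, ht, hd_eq⟩ := exists_eq_single_add_single_of_natAbs_eq_one hd hdi1
  rw [hc_eq, show c i = -d i + -d i by omega] at hx
  rw [hd_eq, ← neg_neg (d i)] at hy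
  exact hℒ.lie_ne_zero_of_long_add_short hij (by omega) ht hx hx0 hy hy0

omit [DecidableEq κ] in
lemma lie_ne_zero {c d : κ → ℤ} (hc : l1Norm c = 2) (hd : l1Norm d = 2) (hcd : l1Norm (c + d) = 2)
    {x y : L} (hx : x ∈ ℒ c) (hx0 : x ≠ 0) (hy : y ∈ ℒ d) (hy0 : y ≠ 0) : ⁅x, y⁆ ≠ 0 := by
  obtain ⟨i, hi⟩ : ∃ i, (c i + d i).natAbs < (c i).natAbs + (d i).natAbs := by
    by_contra! hle
    have hsum := Finset.sum_le_sum fun i (_ : i ∈ Finset.univ) => hle i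
    rw [Finset.sum_add_distrib] at hsum
    change l1Norm c + l1Norm d ≤ l1Norm (c + d) at hsum
    omega
  have hci := natAbs_le_l1Norm c i
  have hdi := natAbs_le_l1Norm d i
  by_cases hci2 : (c i).natAbs = 2
  · exact hℒ.lie_ne_zero_of_natAbs_eq_two hc hd hcd hi hci2 hx hx0 hy hy0
  by_cases hdi2 : (d i).natAbs = 2
  · rw [← lie_skew, neg_ne_zero]
    exact hℒ.lie_ne_zero_of_natAbs_eq_two hd hc (by rwa [add_comm]) (by omega) hdi2 hy hy0 hx hx0
  obtain ⟨l, hil, u, hu, hc_eq⟩ :=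
    exists_eq_single_add_single_of_natAbs_eq_one hc (a := i) (by omega)
  obtain ⟨j, hij, v, hv, hd_eq⟩ :=
    exists_eq_single_add_single_of_natAbs_eq_one hd (a := i) (by omega)
  rcases eq_or_ne l j with rfl | hlj
  · have hvu : v = u := by
      rw [hc_eq, hd_eq, add_add_add_comm, ← Pi.single_add, ← Pi.single_add,
        l1Norm_single_add_single hil] at hcd
      omega
    rw [hc_eq, add_comm] at hx
    rw [hd_eq, hvu, add_comm, show d i = -c i by omega] at hy
    exact hℒ.lie_ne_zero_of_short_add_short hil.symm hu (by omega) hx hx0 hy hy0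
  · rw [hc_eq, show c i = -d i by omega] at hx
    rw [hd_eq] at hy
    exact hℒ.lie_ne_zero_of_short_add_short_disjoint hij hil hlj.symm (by omega) hv hu hx hx0 hy hy0

end IsTypeCGrading

end TypeCGrading

section SymplecticFrame

open SetLike.GradedBracket (bracket_mem)

variable {κ : Type*} [Fintype κ] [DecidableEq κ]

/-- The linear form taking the coordinates in `s` with sign `+` and the others with sign `-`; its
values bound the `ℓ¹`-norm from below. -/
def signedSum (s : Finset κ) : (κ → ℤ) →+ ℤ where
  toFun c := ∑ a, if a ∈ s then c a else -c a
  map_zero' := by simp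
  map_add' c d := by
    rw [← Finset.sum_add_distrib]
    refine Finset.sum_congr rfl fun a _ => ?_
    simp only [Pi.add_apply]
    split_ifs <;> ring

lemma signedSum_le_l1Norm (s : Finset κ) (c : κ → ℤ) : signedSum s c ≤ l1Norm c := by
  rw [l1Norm, Nat.cast_sum]
  refine Finset.sum_le_sum fun a _ => ?_
  split_ifs <;> omega

lemma signedSum_eps (s : Finset κ) (a : κ) : signedSum s (eps a) = if a ∈ s then 1 else -1 := by
  change ∑ _, _ = _
  rw [Finset.sum_eq_single a (fun b _ hb => by simp [hb]) (by simp)]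
  simp

variable {K L : Type*} [Field K] [LieRing L] [LieAlgebra K L]

lemma IsTypeCGrading.lie_eq_zero_of_two_lt_signedSum {ℒ : (κ → ℤ) → Submodule K L}
    [GradedLieAlgebra ℒ] (hℒ : IsTypeCGrading ℒ) (s : Finset κ) {c d : κ → ℤ}
    (hcd : 2 < signedSum s (c + d)) {x y : L} (hx : x ∈ ℒ c) (hy : y ∈ ℒ d) : ⁅x, y⁆ = 0 :=
  hℒ.eq_zero_of_two_lt (by exact_mod_cast hcd.trans_le (signedSum_le_l1Norm s (c + d)))
    (bracket_mem hx hy)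

section SymmetricSquare

variable {I : Type*} [DecidableEq I]

variable (K) in
/-- In the action of `𝔤𝔩(I)` on its symmetric square, the product of the basis vectors `i` and `j`
(up to sign), computed from the square `f` of the basis vector `o` and the matrix units `e i` that
send `o` to `i`. -/
def symmetricSquareVector (o : I) (e : I → L) (f : L) (i j : I) : L :=
  if i = o then if j = o then f else -(2⁻¹ : K) • ⁅e j, f⁆
  else if j = o then -(2⁻¹ : K) • ⁅e i, f⁆ else (2⁻¹ : K) • ⁅e i, ⁅e j, f⁆⁆

variable {o : I} {e : I → L} {f : L}

lemma lie_lie_comm_of_lie_eq_zero {x y : L} (hxy : ⁅x, y⁆ = 0) (z : L) :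
    ⁅x, ⁅y, z⁆⁆ = ⁅y, ⁅x, z⁆⁆ := by
  rw [leibniz_lie, hxy, zero_lie, zero_add]

lemma symmetricSquareVector_comm (he : ∀ i j, i ≠ o → j ≠ o → ⁅e i, e j⁆ = 0) (i j : I) :
    symmetricSquareVector K o e f i j = symmetricSquareVector K o e f j i := by
  by_cases hi : i = o <;> by_cases hj : j = o <;> simp only [symmetricSquareVector, hi, hj, if_true,
    if_false]
  rw [lie_lie_comm_of_lie_eq_zero (he i j hi hj)]

lemma lie_symmetricSquareVector_of_ne {a b : I} (ha : a ≠ o) (hb : b ≠ o) {x : L}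
    (hxe : ∀ j, j ≠ o → ⁅x, e j⁆ = if j = a then -e b else 0) (hxf : ⁅x, f⁆ = 0) (i j : I) :
    ⁅x, symmetricSquareVector K o e f i j⁆ =
      -((if i = a then symmetricSquareVector K o e f b j else 0) +
        (if j = a then symmetricSquareVector K o e f i b else 0)) := by
  have hxef (j : I) (hj : j ≠ o) : ⁅x, ⁅e j, f⁆⁆ = if j = a then -⁅e b, f⁆ else 0 := by
    rw [leibniz_lie, hxf, lie_zero, add_zero, hxe j hj]
    split_ifs <;> simp only [neg_lie, zero_lie]
  by_cases hi : i = o <;> by_cases hj : j = o <;> simp only [symmetricSquareVector, hi, hj, hb,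
    if_true, if_false, lie_smul, ha.symm]
  · rw [hxf, add_zero, neg_zero]
  · rw [hxef j hj, zero_add]
    split_ifs <;> simp only [smul_neg, smul_zero, neg_zero]
  · rw [hxef i hi, add_zero]
    split_ifs <;> simp only [smul_neg, smul_zero, neg_zero]
  · rw [leibniz_lie, hxe i hi, hxef j hj, smul_add, neg_add]
    split_ifs <;> simp only [neg_lie, zero_lie, lie_neg, lie_zero, smul_neg, smul_zero, neg_zero]

lemma lie_symmetricSquareVector_origin [CharZero K]
    (he : ∀ i j, i ≠ o → j ≠ o → ⁅e i, e j⁆ = 0)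
    (hef : ∀ a i j, a ≠ o → i ≠ o → j ≠ o → ⁅e a, ⁅e i, ⁅e j, f⁆⁆⁆ = 0) {b : I} (hb : b ≠ o)
    (i j : I) :
    ⁅e b, symmetricSquareVector K o e f i j⁆ =
      -((if i = o then symmetricSquareVector K o e f b j else 0) +
        (if j = o then symmetricSquareVector K o e f i b else 0)) := by
  have half_add_half (x : L) : (2⁻¹ : K) • x + (2⁻¹ : K) • x = x := by
    rw [← add_smul, ← two_mul, mul_inv_cancel₀ two_ne_zero, one_smul]
  by_cases hi : i = o <;> by_cases hj : j = o <;> simp only [symmetricSquareVector, hi, hj, hb,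
    if_true, if_false, lie_smul]
  · simp only [neg_smul, ← neg_add, half_add_half, neg_neg]
  · simp only [neg_smul, add_zero]
  · rw [lie_lie_comm_of_lie_eq_zero (he b i hb hi), neg_smul, zero_add]
  · rw [hef b i j hb hi hj, smul_zero, add_zero, neg_zero]

end SymmetricSquare

variable {I : Type*} [DecidableEq I] (ℒ : (κ → ℤ) → Submodule K L) (p : I ↪ κ) (b : I → ℕ)

/-- Root vectors `E i j` of weight `ε_i - ε_j`, for labels `b i < b j`, and `F i j` of weight
`-ε_i - ε_j`, where `I` indexes some of the coordinates through `p`. They are normalised so that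
the `E i j` act on the `F i j` as matrix units act on the symmetric square of their dual module. -/
structure SymplecticFrame where
  E : I → I → L
  F : I → I → L
  E_mem : ∀ ⦃i j⦄, b i < b j → E i j ∈ ℒ (eps (p i) - eps (p j))
  E_ne_zero : ∀ ⦃i j⦄, b i < b j → E i j ≠ 0
  F_mem : ∀ i j, F i j ∈ ℒ (-eps (p i) - eps (p j))
  F_ne_zero : ∀ i j, F i j ≠ 0
  F_comm : ∀ i j, F i j = F j i
  lie_E_F : ∀ ⦃k l⦄, b k < b l → ∀ i j,
    ⁅E k l, F i j⁆ = -((if i = k then F l j else 0) + (if j = k then F i l else 0))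

variable {ℒ p b} [GradedLieAlgebra ℒ] [IsSimple K L] (hℒ : IsTypeCGrading ℒ)
include hℒ

namespace IsTypeCGrading

lemma lie_mem_and_ne_zero {a c d : κ} (hac : a ≠ c) {x y : L} (hx : x ∈ ℒ (eps a - eps c))
    (hx0 : x ≠ 0) (hy : y ∈ ℒ (-eps a - eps d)) (hy0 : y ≠ 0) :
    ⁅x, y⁆ ∈ ℒ (-eps c - eps d) ∧ ⁅x, y⁆ ≠ 0 := by
  have hadd : eps a - eps c + (-eps a - eps d) = -eps c - eps d := by abel
  exact ⟨hadd ▸ bracket_mem hx hy, hℒ.lie_ne_zero (l1Norm_eps_sub_eps hac)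
    (l1Norm_neg_eps_sub_eps a d) (by rw [hadd, l1Norm_neg_eps_sub_eps]) hx hx0 hy hy0⟩

lemma exists_lie_eq {a c d : κ} (hac : a ≠ c) (hcd : c ≠ d) (had : a ≠ d) {x z : L}
    (hx : x ∈ ℒ (eps a - eps c)) (hx0 : x ≠ 0) (hz : z ∈ ℒ (eps a - eps d)) :
    ∃ y ∈ ℒ (eps c - eps d), ⁅x, y⁆ = z := by
  obtain ⟨y, hy, hy0⟩ := hℒ.exists_ne_zero (l1Norm_eps_sub_eps hcd)
  have hadd : eps a - eps c + (eps c - eps d) = eps a - eps d := by abel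
  have hxy := bracket_mem (ℒ := ℒ) hx hy
  rw [hadd] at hxy
  have hxy0 : ⁅x, y⁆ ≠ 0 := hℒ.lie_ne_zero (l1Norm_eps_sub_eps hac) (l1Norm_eps_sub_eps hcd)
    (by rw [hadd, l1Norm_eps_sub_eps had]) hx hx0 hy hy0
  obtain ⟨r, rfl⟩ :=
    exists_eq_smul_of_finrank_eq_one (hℒ.finrank_eq_one _ (l1Norm_eps_sub_eps had)) hxy hxy0 hz
  exact ⟨r • y, Submodule.smul_mem _ r hy, lie_smul r x y⟩

lemma symmetricSquareVector_mem_and_ne_zero [CharZero K] {o : I} {e : I → L} {f : L}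
    (he : ∀ i, i ≠ o → e i ∈ ℒ (eps (p o) - eps (p i))) (he0 : ∀ i, i ≠ o → e i ≠ 0)
    (hf : f ∈ ℒ (-eps (p o) - eps (p o))) (hf0 : f ≠ 0) (i j : I) :
    symmetricSquareVector K o e f i j ∈ ℒ (-eps (p i) - eps (p j)) ∧
      symmetricSquareVector K o e f i j ≠ 0 := by
  have hef (i : I) (hi : i ≠ o) := hℒ.lie_mem_and_ne_zero (p.injective.ne hi.symm) (he i hi)
    (he0 i hi) hf hf0
  by_cases hi : i = o <;> by_cases hj : j = o <;> simp only [symmetricSquareVector, hi, hj, if_true,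
    if_false]
  · exact ⟨hf, hf0⟩
  · rw [neg_sub_left, add_comm, ← neg_sub_left]
    exact ⟨Submodule.smul_mem _ _ (hef j hj).1, smul_ne_zero (by simp) (hef j hj).2⟩
  · exact ⟨Submodule.smul_mem _ _ (hef i hi).1, smul_ne_zero (by simp) (hef i hi).2⟩
  · have heef := hℒ.lie_mem_and_ne_zero (p.injective.ne (Ne.symm hi)) (he i hi) (he0 i hi)
      (by rw [neg_sub_left, add_comm, ← neg_sub_left]; exact (hef j hj).1) (hef j hj).2
    exact ⟨Submodule.smul_mem _ _ heef.1, smul_ne_zero (by simp) heef.2⟩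

lemma exists_lie_eq_ite {o i j : I} (hi : i ≠ o) (hj : j ≠ o) (hij : i ≠ j) {e : I → L}
    (he : ∀ l, l ≠ o → e l ∈ ℒ (eps (p o) - eps (p l))) (he0 : ∀ l, l ≠ o → e l ≠ 0) :
    ∃ x ∈ ℒ (eps (p i) - eps (p j)), x ≠ 0 ∧
      ∀ l, l ≠ o → ⁅x, e l⁆ = if l = i then -e j else 0 := by
  obtain ⟨x, hx, hxe⟩ := hℒ.exists_lie_eq (p.injective.ne hi.symm) (p.injective.ne hij)
    (p.injective.ne hj.symm) (he i hi) (he0 i hi) (he j hj)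
  refine ⟨x, hx, fun hx0 => he0 j hj (by rw [← hxe, hx0, lie_zero]), fun l hl => ?_⟩
  split_ifs with hli
  · rw [hli, ← lie_skew, hxe]
  · exact hℒ.lie_eq_zero_of_two_lt_signedSum {p i, p o}
      (by simp [signedSum_eps, hl, hli, hj, hij.symm]) hx (he l hl)

lemma nonempty_symplecticFrame [CharZero K] [Finite I] : Nonempty (SymplecticFrame ℒ p b) := by
  rcases isEmpty_or_nonempty I with hI | hI
  · exact ⟨⟨isEmptyElim, isEmptyElim, isEmptyElim, isEmptyElim, isEmptyElim, isEmptyElim,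
      isEmptyElim, isEmptyElim⟩⟩
  obtain ⟨o, ho⟩ := Finite.exists_min b
  have hne {i j : I} (hij : b i < b j) : j ≠ o := fun h => (h ▸ hij).not_ge (ho i)
  obtain ⟨f, hf, hf0⟩ := hℒ.exists_ne_zero (l1Norm_neg_eps_sub_eps (p o) (p o))
  choose! e he he0 using fun i (hi : i ≠ o) =>
    hℒ.exists_ne_zero (l1Norm_eps_sub_eps (p.injective.ne hi.symm))
  choose! E hE hE0 hEe using fun i j (hij : i ≠ o ∧ b i < b j) =>
    hℒ.exists_lie_eq_ite (p := p) hij.1 (hne hij.2) (ne_of_apply_ne b hij.2.ne) he he0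
  have hee (i j : I) (hi : i ≠ o) (hj : j ≠ o) : ⁅e i, e j⁆ = 0 :=
    hℒ.lie_eq_zero_of_two_lt_signedSum {p o} (by simp [signedSum_eps, hi, hj]) (he i hi) (he j hj)
  have heeef (a i j : I) (ha : a ≠ o) (hi : i ≠ o) (hj : j ≠ o) : ⁅e a, ⁅e i, ⁅e j, f⁆⁆⁆ = 0 :=
    hℒ.lie_eq_zero_of_two_lt_signedSum {p o} (by simp [signedSum_eps, ha, hi, hj]) (he a ha)
      (bracket_mem (he i hi) (bracket_mem (he j hj) hf))
  have hEf {i j : I} (hi : i ≠ o) (hij : b i < b j) : ⁅E i j, f⁆ = 0 :=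
    hℒ.lie_eq_zero_of_two_lt_signedSum {p i}
      (by simp [signedSum_eps, hi.symm, ne_of_apply_ne b hij.ne']) (hE i j ⟨hi, hij⟩) hf
  exact ⟨{
    E := fun i j => if i = o then e j else E i j
    F := symmetricSquareVector K o e f
    E_mem := fun i j hij => by
      split_ifs with hi
      · exact hi ▸ he j (hne hij)
      · exact hE i j ⟨hi, hij⟩
    E_ne_zero := fun i j hij => by
      split_ifs with hi
      · exact he0 j (hne hij)
      · exact hE0 i j ⟨hi, hij⟩
    F_mem := fun i j => (hℒ.symmetricSquareVector_mem_and_ne_zero he he0 hf hf0 i j).1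
    F_ne_zero := fun i j => (hℒ.symmetricSquareVector_mem_and_ne_zero he he0 hf hf0 i j).2
    F_comm := symmetricSquareVector_comm hee
    lie_E_F := fun k l hkl i j => by
      rcases eq_or_ne k o with rfl | hk
      · rw [if_pos rfl, lie_symmetricSquareVector_origin hee heeef (hne hkl)]
      · rw [if_neg hk,
          lie_symmetricSquareVector_of_ne hk (hne hkl) (hEe k l ⟨hk, hkl⟩) (hEf hk hkl)] }⟩

end IsTypeCGrading

end SymplecticFrame

section WeightSets

variable {κ I : Type*}

lemma neg_eps_sub_eps_eq_iff [DecidableEq κ] {p : I ↪ κ} {i j k l : I} :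
    -eps (p k) - eps (p l) = -eps (p i) - eps (p j) ↔ k = i ∧ l = j ∨ k = j ∧ l = i := by
  rw [neg_sub_left, neg_sub_left, neg_inj,
    Pi.single_add_single_eq_single_add_single one_ne_zero one_ne_zero]
  simp only [p.injective.eq_iff, true_and]
  tauto

variable [Fintype I]

/-- The linear form on weights whose coefficients are `w` on the coordinates indexed by `I` and zero
elsewhere. -/
def weightedDegree (p : I ↪ κ) (w : I → ℤ) : (κ → ℤ) →+ ℤ :=
  ∑ i, w i • Pi.evalAddMonoidHom (fun _ => ℤ) (p i)

/-- The sum of the coordinates indexed by `I`. -/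
abbrev degree (p : I ↪ κ) : (κ → ℤ) →+ ℤ := weightedDegree p 1

/-- The weights `ε_i - ε_j` with `i` in an earlier block than `j`. -/
def strictUpperWeights [DecidableEq κ] (p : I ↪ κ) (b : I → ℕ) : Set (κ → ℤ) :=
  {c | ∃ i j, b i < b j ∧ c = eps (p i) - eps (p j)}

variable (p : I ↪ κ) {b : I → ℕ}

lemma weightedDegree_apply (w : I → ℤ) (c : κ → ℤ) :
    weightedDegree p w c = ∑ i, w i * c (p i) := by
  simp [weightedDegree]

lemma natAbs_degree_le_l1Norm [Fintype κ] (c : κ → ℤ) : (degree p c).natAbs ≤ l1Norm c := by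
  simp only [weightedDegree_apply, Pi.one_apply, one_mul]
  calc (∑ i, c (p i)).natAbs ≤ ∑ i, (c (p i)).natAbs := Int.natAbs_sum_le _ _
    _ = ∑ a ∈ Finset.univ.map p, (c a).natAbs :=
      (Finset.sum_map Finset.univ p fun a => (c a).natAbs).symm
    _ ≤ l1Norm c := sum_natAbs_le_l1Norm c _

variable [DecidableEq κ]

lemma weightedDegree_single (w : I → ℤ) (i : I) (u : ℤ) :
    weightedDegree p w (Pi.single (p i) u) = w i * u := by
  rw [weightedDegree_apply, Finset.sum_eq_single i, Pi.single_eq_same]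
  · exact fun j _ hj => by rw [Pi.single_eq_of_ne (p.injective.ne hj), mul_zero]
  · exact fun h => absurd (Finset.mem_univ i) h

lemma weightedDegree_single_of_notMem_range (w : I → ℤ) {a : κ} (ha : a ∉ Set.range p) (u : ℤ) :
    weightedDegree p w (Pi.single a u) = 0 := by
  rw [weightedDegree_apply]
  exact Finset.sum_eq_zero fun i _ => by rw [Pi.single_eq_of_ne fun h => ha ⟨i, h⟩, mul_zero]

lemma weightedDegree_eps_sub_eps (w : I → ℤ) (i j : I) :
    weightedDegree p w (eps (p i) - eps (p j)) = w i - w j := by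
  rw [map_sub, weightedDegree_single, weightedDegree_single, mul_one, mul_one]

lemma degree_neg_eps_sub_eps (i j : I) : degree p (-eps (p i) - eps (p j)) = -2 := by
  rw [map_sub, map_neg, weightedDegree_single, weightedDegree_single]
  rfl

variable {p}

lemma degree_eq_zero_of_mem_strictUpperWeights {c : κ → ℤ} (hc : c ∈ strictUpperWeights p b) :
    degree p c = 0 := by
  obtain ⟨i, j, -, rfl⟩ := hc
  rw [weightedDegree_eps_sub_eps]
  rfl

lemma weightedDegree_neg_of_mem_strictUpperWeights {c : κ → ℤ}
    (hc : c ∈ strictUpperWeights p b) : weightedDegree p (fun i => b i) c < 0 := by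
  obtain ⟨i, j, hij, rfl⟩ := hc
  rw [weightedDegree_eps_sub_eps]
  omega

/-- The weights that a Lie algebra element must have for the bracket with a nondegenerate element
of degree `-2` to be injective on it: those of degree one and those of `strictUpperWeights`. -/
def raisingWeights (p : I ↪ κ) (b : I → ℕ) : Set (κ → ℤ) :=
  {c | degree p c = 1} ∪ strictUpperWeights p b

lemma zero_notMem_raisingWeights : (0 : κ → ℤ) ∉ raisingWeights p b := by
  rintro (hdeg | hupper)
  · exact zero_ne_one ((map_zero (degree p)).symm.trans hdeg)
  · exact (weightedDegree_neg_of_mem_strictUpperWeights hupper).ne (map_zero _)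

lemma eps_sub_eps_notMem_raisingWeights {i j : I} (hij : b i < b j) :
    eps (p j) - eps (p i) ∉ raisingWeights p b := by
  rintro (hdeg | hupper)
  · exact zero_ne_one ((weightedDegree_eps_sub_eps p 1 j i).symm.trans hdeg)
  · have := weightedDegree_neg_of_mem_strictUpperWeights hupper
    rw [weightedDegree_eps_sub_eps] at this
    omega

variable [Fintype κ]

lemma exists_eq_neg_eps_sub_eps {c : κ → ℤ} (hc : l1Norm c = 2) (hdeg : degree p c = -2) :
    ∃ i j, c = -eps (p i) - eps (p j) := by
  obtain ⟨a, a', u, u', hu, hu', rfl⟩ := exists_eq_single_add_single_of_l1Norm_eq_two hc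
  have hrange {a : κ} {u : ℤ} (hdeg : degree p (Pi.single a u) ≠ 0) : ∃ i, p i = a := by
    by_contra ha
    exact hdeg (weightedDegree_single_of_notMem_range p _ ha u)
  have hle (a : κ) (u : ℤ) : (degree p (Pi.single a u)).natAbs ≤ u.natAbs :=
    (natAbs_degree_le_l1Norm p _).trans_eq (l1Norm_single a u)
  have hle_a := hle a u
  have hle_a' := hle a' u'
  rw [map_add] at hdeg
  obtain ⟨i, rfl⟩ := hrange (a := a) (u := u) (by omega)
  obtain ⟨j, rfl⟩ := hrange (a := a') (u := u') (by omega)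
  simp only [weightedDegree_single, Pi.one_apply, one_mul] at hdeg
  obtain rfl : u = -1 := by omega
  obtain rfl : u' = -1 := by omega
  exact ⟨i, j, by rw [Pi.single_neg, Pi.single_neg, sub_eq_add_neg]⟩

omit [Fintype I] in
lemma add_mem_strictUpperWeights {c d : κ → ℤ} (hc : c ∈ strictUpperWeights p b)
    (hd : d ∈ strictUpperWeights p b) (hcd : l1Norm (c + d) ≤ 2) :
    c + d ∈ strictUpperWeights p b := by
  obtain ⟨i, j, hij, rfl⟩ := hc
  obtain ⟨k, l, hkl, rfl⟩ := hd
  by_cases hjk : j = k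
  · exact ⟨i, l, hij.trans (hjk ▸ hkl), by rw [hjk, sub_add_sub_cancel]⟩
  by_cases hli : l = i
  · exact ⟨k, j, hkl.trans (hli ▸ hij), by rw [hli, sub_add_sub_cancel']⟩
  have hji : j ≠ i := ne_of_apply_ne b hij.ne'
  have hlk : l ≠ k := ne_of_apply_ne b hkl.ne'
  have h4 : signedSum {p i, p k} (eps (p i) - eps (p j) + (eps (p k) - eps (p l))) = 4 := by
    simp [signedSum_eps, hjk, hli, hji, hlk]
  have := signedSum_le_l1Norm {p i, p k} (eps (p i) - eps (p j) + (eps (p k) - eps (p l)))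
  omega

lemma add_mem_raisingWeights {c d : κ → ℤ} (hc : c ∈ strictUpperWeights p b)
    (hd : d ∈ raisingWeights p b) (hcd : l1Norm (c + d) ≤ 2) : c + d ∈ raisingWeights p b := by
  rcases hd with hd | hd
  · exact .inl (by rw [Set.mem_ofPred_eq, map_add, degree_eq_zero_of_mem_strictUpperWeights hc,
      zero_add, hd])
  · exact .inr (add_mem_strictUpperWeights hc hd hcd)

lemma exists_eq_eps_add_single_of_degree_eq_one {c : κ → ℤ} (hc : l1Norm c = 2)
    (hdeg : degree p c = 1) :
    ∃ i, ∃ a ∉ Set.range p, ∃ u : ℤ, u.natAbs = 1 ∧ c = eps (p i) + Pi.single a u := by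
  obtain ⟨a, a', u, u', hu, hu', rfl⟩ := exists_eq_single_add_single_of_l1Norm_eq_two hc
  rw [map_add] at hdeg
  by_cases ha : a ∈ Set.range p <;> by_cases ha' : a' ∈ Set.range p
  · obtain ⟨i, rfl⟩ := ha
    obtain ⟨j, rfl⟩ := ha'
    simp only [weightedDegree_single, Pi.one_apply, one_mul] at hdeg
    omega
  · obtain ⟨i, rfl⟩ := ha
    rw [weightedDegree_single, weightedDegree_single_of_notMem_range p _ ha', Pi.one_apply,
      one_mul, add_zero] at hdeg
    exact ⟨i, a', ha', u', hu', by rw [hdeg]⟩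
  · obtain ⟨i, rfl⟩ := ha'
    rw [weightedDegree_single, weightedDegree_single_of_notMem_range p _ ha, Pi.one_apply,
      one_mul, zero_add] at hdeg
    exact ⟨i, a, ha, u, hu, by rw [hdeg, add_comm]⟩
  · rw [weightedDegree_single_of_notMem_range p _ ha, weightedDegree_single_of_notMem_range p _ ha']
      at hdeg
    omega

lemma exists_lowering_index {c : κ → ℤ} (hc : c ∈ raisingWeights p b) (hc2 : l1Norm c = 2) :
    ∃ i, l1Norm (-eps (p i) - eps (p i) + c) = 2 ∧
      ∀ k, -eps (p i) - eps (p i) + c - (-eps (p k) - eps (p k)) ∈ raisingWeights p b →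
        l1Norm (-eps (p i) - eps (p i) + c - (-eps (p k) - eps (p k))) ≤ 2 → k = i := by
  have hne {i k : I} (h : k ≠ i) : p k ≠ p i := p.injective.ne h
  rcases hc with hdeg | ⟨i, j, hij, rfl⟩
  · obtain ⟨i, a, ha, u, hu, rfl⟩ := exists_eq_eps_add_single_of_degree_eq_one hc2 hdeg
    have hap (k : I) : a ≠ p k := fun h => ha ⟨k, h.symm⟩
    have hlower : -eps (p i) - eps (p i) + (eps (p i) + Pi.single a u) =
        Pi.single (p i) (-1) + Pi.single a u := by
      rw [Pi.single_neg]
      abel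
    refine ⟨i, ?_, fun k _ hk => ?_⟩
    · rw [hlower, l1Norm_single_add_single (hap i).symm, hu]
      rfl
    · rw [hlower] at hk
      by_contra hki
      have h3 := natAbs_add_natAbs_add_natAbs_le_l1Norm (Pi.single (p i) (-1) + Pi.single a u -
        (-eps (p k) - eps (p k))) (hne hki) (hap k).symm (hap i).symm
      simp [hne hki, (hne hki).symm, hap, (hap _).symm, hu] at h3
      omega
  · have hji : j ≠ i := ne_of_apply_ne b hij.ne'
    have hlower : -eps (p i) - eps (p i) + (eps (p i) - eps (p j)) = -eps (p i) - eps (p j) := by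
      abel
    refine ⟨i, by rw [hlower, l1Norm_neg_eps_sub_eps], fun k hkmem hk => ?_⟩
    rw [hlower] at hk hkmem
    by_contra hki
    rcases eq_or_ne k j with rfl | hkj
    · exact eps_sub_eps_notMem_raisingWeights hij
        (by rwa [sub_sub_sub_cancel_right, neg_sub_neg] at hkmem)
    · have h3 := natAbs_add_natAbs_add_natAbs_le_l1Norm (-eps (p i) - eps (p j) -
        (-eps (p k) - eps (p k))) (hne hki) (hne hkj) (hne hji).symm
      simp [hne hki, (hne hki).symm, hne hkj, (hne hkj).symm, hne hji, (hne hji).symm] at h3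
      omega

end WeightSets

section FrameMaps

open scoped Matrix

variable {κ I K L : Type*} [DecidableEq κ] [Field K] [LieRing L]
  [LieAlgebra K L] {ℒ : (κ → ℤ) → Submodule K L} {p : I ↪ κ} {b e : I → ℕ}

variable (I K) in
/-- The symmetric matrices, as a submodule. -/
def symmetricMatrices : Submodule K (Matrix I I K) where
  carrier := {S | S.IsSymm}
  add_mem' := Matrix.IsSymm.add
  zero_mem' := Matrix.isSymm_zero
  smul_mem' r _ hS := hS.smul r

variable [Fintype I]

variable (K) in
/-- The linear map sending a matrix to the combination of the vectors `v i j` with the entries of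
the matrix as coefficients. -/
def matrixCombination (v : I → I → L) : Matrix I I K →ₗ[K] L :=
  ∑ i, ∑ j, (Matrix.entryLinearMap K K i j).smulRight (v i j)

lemma matrixCombination_apply (v : I → I → L) (S : Matrix I I K) :
    matrixCombination K v S = ∑ i, ∑ j, S i j • v i j := by
  simp [matrixCombination]

lemma matrixCombination_transpose_mul (v : I → I → L) (X S : Matrix I I K) :
    matrixCombination K v (Xᵀ * S) = ∑ i, ∑ j, S i j • ∑ l, X i l • v l j := by
  simp only [matrixCombination_apply, Matrix.mul_apply, Matrix.transpose_apply, Finset.sum_smul,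
    Finset.smul_sum, smul_smul, mul_comm (S _ _)]
  rw [Finset.sum_comm_cycle]
  exact Finset.sum_congr rfl fun i _ => Finset.sum_comm

lemma matrixCombination_mul (v : I → I → L) (S X : Matrix I I K) :
    matrixCombination K v (S * X) = ∑ i, ∑ j, S i j • ∑ l, X j l • v i l := by
  simp only [matrixCombination_apply, Matrix.mul_apply, Finset.sum_smul, Finset.smul_sum,
    smul_smul]
  exact Finset.sum_congr rfl fun i _ => Finset.sum_comm

variable [DecidableEq I]

lemma matrixCombination_single (v : I → I → L) (i j : I) (r : K) :
    matrixCombination K v (Matrix.single i j r) = r • v i j := by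
  rw [matrixCombination_apply, Fintype.sum_eq_single i, Fintype.sum_eq_single j,
    Matrix.single_apply_same]
  · exact fun l hl => by rw [Matrix.single_apply_of_col_ne _ _ hl.symm, zero_smul]
  · exact fun k hk => Finset.sum_eq_zero fun l _ => by
      rw [Matrix.single_apply_of_row_ne hk.symm, zero_smul]

lemma matrixCombination_diagonal (v : I → I → L) (d : I → K) :
    matrixCombination K v (Matrix.diagonal d) = ∑ i, d i • v i i := by
  rw [matrixCombination_apply]
  refine Finset.sum_congr rfl fun i _ => ?_
  rw [Fintype.sum_eq_single i fun j hj => by rw [Matrix.diagonal_apply_ne' _ hj, zero_smul],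
    Matrix.diagonal_apply_eq]

namespace SymplecticFrame

variable (fr : SymplecticFrame ℒ p e)

/-- The map sending a strictly block upper triangular matrix `X` to the element `∑ X i j • E i j` of
degree zero. -/
def upperMap : Matrix I I K →ₗ[K] L := matrixCombination K fr.E

/-- The map sending a symmetric matrix `S` to the element `∑ S i j • F i j` of degree `-2`. -/
def symmMap : Matrix I I K →ₗ[K] L := matrixCombination K fr.F

lemma upperMap_mem (hbe : ∀ i j, b i < b j → e i < e j) {X : Matrix I I K}
    (hX : X ∈ strictBlockUpper K b) :
    fr.upperMap X ∈ componentSum ℒ (strictUpperWeights p b) := by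
  rw [upperMap, matrixCombination_apply]
  refine sum_mem fun i _ => sum_mem fun j _ => ?_
  by_cases hij : b i < b j
  · exact Submodule.smul_mem _ _ (mem_componentSum_of_mem (S := strictUpperWeights p b)
      ⟨i, j, hij, rfl⟩ (fr.E_mem (hbe i j hij)))
  · rw [hX i j (not_lt.1 hij), zero_smul]
    exact zero_mem _

lemma symmMap_mem (S : Matrix I I K) : fr.symmMap S ∈ componentSum ℒ {c | degree p c = -2} := by
  rw [symmMap, matrixCombination_apply]
  exact sum_mem fun i _ => sum_mem fun j _ => Submodule.smul_mem _ _
    (mem_componentSum_of_mem (S := {c | degree p c = -2}) (degree_neg_eps_sub_eps p i j)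
      (fr.F_mem i j))

lemma symmMap_transpose (S : Matrix I I K) : fr.symmMap Sᵀ = fr.symmMap S := by
  simp only [symmMap, matrixCombination_apply, Matrix.transpose_apply]
  rw [Finset.sum_comm]
  simp only [fr.F_comm]

lemma lie_upperMap_F {X : Matrix I I K} (hX : X ∈ strictBlockUpper K e) (i j : I) :
    ⁅fr.upperMap X, fr.F i j⁆ = -(∑ l, X i l • fr.F l j + ∑ l, X j l • fr.F i l) := by
  have hterm (k l : I) : ⁅X k l • fr.E k l, fr.F i j⁆ =
      -((if i = k then X k l • fr.F l j else 0) + (if j = k then X k l • fr.F i l else 0)) := by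
    by_cases hkl : e k < e l
    · simp only [smul_lie, fr.lie_E_F hkl, smul_neg, smul_add, smul_ite, smul_zero]
    · simp only [hX k l (not_lt.1 hkl), zero_smul, zero_lie, ite_self, add_zero, neg_zero]
  simp only [upperMap, matrixCombination_apply, sum_lie, hterm, Finset.sum_neg_distrib,
    Finset.sum_add_distrib]
  rw [Finset.sum_comm, Finset.sum_comm (γ := I) (f := fun k l => if j = k then _ else _)]
  simp only [Finset.sum_ite_eq, Finset.mem_univ, if_true]

lemma lie_upperMap_symmMap {X : Matrix I I K} (hX : X ∈ strictBlockUpper K e)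
    (S : Matrix I I K) : ⁅fr.upperMap X, fr.symmMap S⁆ = fr.symmMap (congruenceAction X S) := by
  rw [congruenceAction_apply, symmMap, map_neg, map_add, matrixCombination_transpose_mul,
    matrixCombination_mul, matrixCombination_apply]
  simp only [lie_sum, lie_smul, fr.lie_upperMap_F hX, smul_neg, smul_add, Finset.sum_neg_distrib,
    Finset.sum_add_distrib]

lemma lie_upperMap_symmMap_of_isSymm {X : Matrix I I K} (hX : X ∈ strictBlockUpper K e)
    {S : Matrix I I K} (hS : S.IsSymm) :
    ⁅fr.upperMap X, fr.symmMap S⁆ = -((2 : K) • fr.symmMap (S * X)) := by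
  have htranspose : fr.symmMap (Xᵀ * S) = fr.symmMap (S * X) := by
    rw [← fr.symmMap_transpose, Matrix.transpose_mul, Matrix.transpose_transpose, hS.eq]
  rw [fr.lie_upperMap_symmMap hX, congruenceAction_apply, map_neg, map_add, htranspose, two_smul]

variable [Fintype κ]

lemma gradedProj_symmMap [GradedLieAlgebra ℒ] {S : Matrix I I K} (hS : S.IsSymm) (i j : I) :
    gradedProj ℒ (-eps (p i) - eps (p j)) (fr.symmMap S) =
      (if i = j then 1 else 2 : K) • S i j • fr.F i j := by
  have hsum : gradedProj ℒ (-eps (p i) - eps (p j)) (fr.symmMap S) =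
      ∑ q ∈ {(i, j), (j, i)}, S q.1 q.2 • fr.F q.1 q.2 := by
    rw [symmMap, matrixCombination_apply, ← Fintype.sum_prod_type', map_sum]
    refine (Finset.sum_subset (Finset.subset_univ _) fun q _ hq => ?_).symm.trans
      (Finset.sum_congr rfl fun q hq => ?_)
    · rw [map_smul, gradedProj_of_mem_ne (fr.F_mem q.1 q.2) ?_, smul_zero]
      rw [Ne, neg_eps_sub_eps_eq_iff]
      simpa [Prod.ext_iff] using hq
    · have hweight : -eps (p q.1) - eps (p q.2) = -eps (p i) - eps (p j) :=
        neg_eps_sub_eps_eq_iff.2 (by simpa [Prod.ext_iff] using hq)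
      rw [map_smul, gradedProj_of_mem (hweight ▸ fr.F_mem q.1 q.2)]
  rw [hsum]
  split_ifs with hij
  · rw [hij, Finset.pair_eq_singleton, Finset.sum_singleton, one_smul]
  · rw [Finset.sum_pair (by simp [hij]), hS.apply, fr.F_comm j i, two_smul]

lemma eq_zero_of_symmMap_eq_zero [CharZero K] [GradedLieAlgebra ℒ] {S : Matrix I I K}
    (hS : S.IsSymm) (h : fr.symmMap S = 0) : S = 0 := by
  ext i j
  have hij := fr.gradedProj_symmMap hS i j
  rw [h, map_zero] at hij
  have hSF := (smul_eq_zero.1 hij.symm).resolve_left (by split_ifs <;> simp)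
  exact (smul_eq_zero.1 hSF).resolve_right (fr.F_ne_zero i j)

variable (hℒ : IsTypeCGrading ℒ)
include hℒ

lemma exists_upperMap_eq (hbe : ∀ i j, b i < b j → e i < e j) {x : L}
    (hx : x ∈ componentSum ℒ (strictUpperWeights p b)) :
    ∃ X ∈ strictBlockUpper K b, fr.upperMap X = x := by
  have hle : componentSum ℒ (strictUpperWeights p b) ≤ (strictBlockUpper K b).map fr.upperMap := by
    refine componentSum_le ?_
    rintro _ ⟨i, j, hij, rfl⟩ y hy
    obtain ⟨r, rfl⟩ := exists_eq_smul_of_finrank_eq_one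
      (hℒ.finrank_eq_one _ (l1Norm_eps_sub_eps (p.injective.ne (ne_of_apply_ne b hij.ne))))
      (fr.E_mem (hbe i j hij)) (fr.E_ne_zero (hbe i j hij)) hy
    refine ⟨Matrix.single i j r, fun k l hlk => Matrix.single_apply_of_ne _ _ _ _ _ ?_,
      matrixCombination_single _ i j r⟩
    rintro ⟨rfl, rfl⟩
    exact hij.not_ge hlk
  exact hle hx

lemma map_symmMap_symmetricMatrices [CharZero K] :
    (symmetricMatrices I K).map fr.symmMap = componentSum ℒ {c | degree p c = -2} := by
  refine le_antisymm (Submodule.map_le_iff_le_comap.2 fun S _ => fr.symmMap_mem S)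
    (componentSum_le fun c hc x hx => ?_)
  have hc0 : c ≠ 0 := by
    rintro rfl
    exact absurd ((map_zero (degree p)).symm.trans hc) (by norm_num)
  by_cases hc2 : l1Norm c = 2
  · obtain ⟨i, j, rfl⟩ := exists_eq_neg_eps_sub_eps hc2 hc
    obtain ⟨r, rfl⟩ := exists_eq_smul_of_finrank_eq_one (hℒ.finrank_eq_one _ hc2) (fr.F_mem i j)
      (fr.F_ne_zero i j) hx
    refine ⟨Matrix.single i j (2⁻¹ * r) + Matrix.single j i (2⁻¹ * r), ?_, ?_⟩
    · change (_ : Matrix I I K)ᵀ = _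
      rw [Matrix.transpose_add, Matrix.transpose_single, Matrix.transpose_single, add_comm]
    · rw [map_add, symmMap, matrixCombination_single, matrixCombination_single, fr.F_comm j i,
        ← add_smul, ← two_mul, mul_inv_cancel_left₀ two_ne_zero]
  · rw [hℒ.eq_bot c hc0 hc2, Submodule.mem_bot] at hx
    rw [hx]
    exact zero_mem _

lemma exists_symmCoordinates [CharZero K] [GradedLieAlgebra ℒ] :
    ∃ Ψ : L →ₗ[K] Matrix I I K, (∀ w, (Ψ w).IsSymm) ∧ (∀ S, S.IsSymm → Ψ (fr.symmMap S) = S) ∧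
      ∀ w, w - fr.symmMap (Ψ w) ∈ componentSum ℒ {c | degree p c ≠ -2} := by
  have hcompl := isCompl_componentSum_compl ℒ {c | degree p c = -2}
  have hinj : LinearMap.ker (fr.symmMap.domRestrict (symmetricMatrices I K)) = ⊥ :=
    LinearMap.ker_eq_bot'.2 fun S hS => Subtype.ext (fr.eq_zero_of_symmMap_eq_zero S.2 hS)
  obtain ⟨g, hg⟩ := LinearMap.exists_leftInverse_of_injective _ hinj
  have hg_apply {S : Matrix I I K} (hS : S.IsSymm) : g (fr.symmMap S) = S :=
    congrArg Subtype.val (LinearMap.congr_fun hg ⟨S, hS⟩)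
  refine ⟨(symmetricMatrices I K).subtype ∘ₗ g ∘ₗ Submodule.projection _ _ hcompl,
    fun w => (g _).2, fun S hS => ?_, fun w => ?_⟩
  · exact (congrArg (fun v => (g v : Matrix I I K))
      (Submodule.projection_apply_of_mem_left hcompl (fr.symmMap_mem S))).trans (hg_apply hS)
  · have hw := Submodule.projection_apply_mem hcompl w
    obtain ⟨S, hS, hSw⟩ := (fr.map_symmMap_symmetricMatrices hℒ).ge hw
    change w - fr.symmMap (g (Submodule.projection _ _ hcompl w)) ∈ _
    rw [← hSw, hg_apply hS, hSw]
    exact Submodule.sub_projection_mem hcompl w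

variable [GradedLieAlgebra ℒ]

lemma gradedProj_lie_symmMap_diagonal {d : I → K} {x : L}
    (hx : x ∈ componentSum ℒ (raisingWeights p e)) {c : κ → ℤ} {i : I}
    (hi : ∀ k, -eps (p i) - eps (p i) + c - (-eps (p k) - eps (p k)) ∈ raisingWeights p e →
      l1Norm (-eps (p i) - eps (p i) + c - (-eps (p k) - eps (p k))) ≤ 2 → k = i) :
    gradedProj ℒ (-eps (p i) - eps (p i) + c) ⁅fr.symmMap (Matrix.diagonal d), x⁆ =
      d i • ⁅fr.F i i, gradedProj ℒ c x⁆ := by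
  have hterm (k : I) : gradedProj ℒ (-eps (p i) - eps (p i) + c) ⁅fr.F k k, x⁆ =
      ⁅fr.F k k, gradedProj ℒ (-eps (p i) - eps (p i) + c - (-eps (p k) - eps (p k))) x⁆ := by
    rw [← gradedProj_lie (fr.F_mem k k), add_sub_cancel]
  rw [symmMap, matrixCombination_diagonal, sum_lie, map_sum, Fintype.sum_eq_single i]
  · rw [smul_lie, map_smul, hterm, add_sub_cancel_left]
  · intro k hki
    rw [smul_lie, map_smul, hterm]
    suffices gradedProj ℒ (-eps (p i) - eps (p i) + c - (-eps (p k) - eps (p k))) x = 0 by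
      rw [this, lie_zero, smul_zero]
    by_contra hne
    exact hki (hi k (not_imp_comm.1 (mem_componentSum_iff.1 hx _) hne)
      (hℒ.l1Norm_le_two ((Submodule.ne_bot_iff _).2 ⟨_, gradedProj_mem ℒ _ x, hne⟩)))

lemma eq_zero_of_lie_symmMap_diagonal [Module.Finite K L] [LieAlgebra.IsSimple K L]
    [CharZero K] {d : I → K} (hd : ∀ i, d i ≠ 0) {x : L}
    (hx : x ∈ componentSum ℒ (raisingWeights p e))
    (h : ⁅fr.symmMap (Matrix.diagonal d), x⁆ = 0) : x = 0 := by
  refine eq_zero_of_forall_gradedProj (ℳ := ℒ) fun c => ?_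
  by_contra hne
  have hc := not_imp_comm.1 (mem_componentSum_iff.1 hx c) hne
  have hc0 : c ≠ 0 := ne_of_mem_of_not_mem hc zero_notMem_raisingWeights
  have hc2 : l1Norm c = 2 := by
    by_contra hc2
    exact hne ((Submodule.eq_bot_iff _).1 (hℒ.eq_bot c hc0 hc2) _ (gradedProj_mem ℒ c x))
  obtain ⟨i, hi2, hi⟩ := exists_lowering_index hc hc2
  have hproj := fr.gradedProj_lie_symmMap_diagonal hℒ (d := d) hx hi
  rw [h, map_zero] at hproj
  exact hℒ.lie_ne_zero (l1Norm_neg_eps_sub_eps _ _) hc2 hi2 (fr.F_mem i i) (fr.F_ne_zero i i)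
    (gradedProj_mem ℒ c x) hne ((smul_eq_zero.1 hproj.symm).resolve_left (hd i))

end SymplecticFrame

end FrameMaps

section GenericStabilisers

open scoped Matrix

lemma exists_polyFunction_ne_zero_iff_hasUnitPrincipalMinors {V n : Type*} [AddCommGroup V]
    [Module ℂ V] [Finite n] [DecidableEq n] (Ψ : V →ₗ[ℂ] Matrix n n ℂ) :
    ∃ P ∈ polyFunctions V, ∀ v, P v ≠ 0 ↔ HasUnitPrincipalMinors (Ψ v) := by
  have := Fintype.ofFinite n
  let entries : Matrix n n (polyFunctions V) := Matrix.of fun i j =>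
    ⟨_, coe_mem_polyFunctions (Matrix.entryLinearMap ℂ ℂ i j ∘ₗ Ψ)⟩
  let minor (s : Finset n) : polyFunctions V :=
    (entries.submatrix ((↑) : s → n) ((↑) : s → n)).det
  have hminor (s : Finset n) (v : V) :
      (minor s : V → ℂ) v = ((Ψ v).submatrix ((↑) : s → n) ((↑) : s → n)).det :=
    RingHom.map_det ((Pi.evalRingHom (fun _ : V => ℂ) v).comp (polyFunctions V).val.toRingHom) _
  refine ⟨_, (∏ s, minor s).2, fun v => ?_⟩
  have hprod : ((∏ s, minor s : polyFunctions V) : V → ℂ) v = ∏ s, (minor s : V → ℂ) v := by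
    rw [SubmonoidClass.coe_finsetProd, Finset.prod_apply]
  simp only [hprod, hminor, Finset.prod_ne_zero_iff, Finset.mem_univ, true_imp_iff,
    HasUnitPrincipalMinors, isUnit_iff_ne_zero]

section RelativeStabiliser

variable {K L : Type*} [Field K] [LieRing L] [LieAlgebra K L]

/-- The stabiliser in `A` of the functional `κ(v, ·)` on `B`, for the Killing form `κ`. -/
def relStabiliser (v : L) (A B : Submodule K L) : Submodule K L where
  carrier := {x | x ∈ A ∧ ∀ y ∈ B, killingForm K L v ⁅x, y⁆ = 0}
  add_mem' := by
    rintro x x' ⟨hx, hx_stab⟩ ⟨hx', hx'_stab⟩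
    exact ⟨add_mem hx hx', fun y hy => by
      rw [add_lie, map_add, hx_stab y hy, hx'_stab y hy, add_zero]⟩
  zero_mem' := ⟨zero_mem A, fun y _ => by rw [zero_lie, map_zero]⟩
  smul_mem' := by
    rintro r x ⟨hx, hx_stab⟩
    exact ⟨A.smul_mem r hx, fun y hy => by rw [smul_lie, map_smul, hx_stab y hy, smul_zero]⟩

lemma map_relStabiliser (σ : L ≃ₗ⁅K⁆ L) {A B : Submodule K L} (hA : ∀ x, σ x ∈ A ↔ x ∈ A)
    (hB : ∀ x, σ x ∈ B ↔ x ∈ B) (v : L) :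
    (relStabiliser v A B).map (σ : L →ₗ[K] L) = relStabiliser (σ v) A B := by
  have hform (x y : L) : killingForm K L (σ v) ⁅σ x, σ y⁆ = killingForm K L v ⁅x, y⁆ := by
    rw [← LieEquiv.map_lie]
    exact LieAlgebra.killingForm_of_equiv_apply σ v _
  ext x
  constructor
  · rintro ⟨x, ⟨hx, hx_stab⟩, rfl⟩
    refine ⟨(hA x).2 hx, fun y hy => ?_⟩
    obtain ⟨y, rfl⟩ := σ.surjective y
    exact (hform x y).trans (hx_stab y ((hB y).1 hy))
  · obtain ⟨x, rfl⟩ := σ.surjective x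
    rintro ⟨hx, hx_stab⟩
    exact ⟨x, ⟨(hA x).1 hx, fun y hy => (hform x y).symm.trans (hx_stab _ ((hB y).2 hy))⟩, rfl⟩

end RelativeStabiliser

variable {κ I L : Type*} [Fintype κ] [DecidableEq κ] [Fintype I] [DecidableEq I]
  [LieRing L] [LieAlgebra ℂ L] {ℒ : (κ → ℤ) → Submodule ℂ L} [GradedLieAlgebra ℒ] {p : I ↪ κ}
  {b e : I → ℕ}

section Degree

omit [DecidableEq κ] [DecidableEq I]

lemma IsTypeCGrading.lie_eq_zero_of_two_lt_degree (hℒ : IsTypeCGrading ℒ) {r s : ℤ}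
    (hrs : 2 < r + s) {x y : L} (hx : x ∈ componentSum ℒ {c | r ≤ degree p c})
    (hy : y ∈ componentSum ℒ {c | s ≤ degree p c}) : ⁅x, y⁆ = 0 := by
  have hmem : ⁅x, y⁆ ∈ componentSum ℒ ∅ := by
    refine lie_mem_componentSum (fun c hc d hd hcd => absurd (hℒ.l1Norm_le_two hcd) ?_) hx hy
    have hle := natAbs_degree_le_l1Norm p (c + d)
    rw [map_add] at hle
    have hc : r ≤ degree p c := hc
    have hd : s ≤ degree p d := hd
    omega
  exact eq_zero_of_forall_gradedProj (ℳ := ℒ) fun c =>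
    mem_componentSum_iff.1 hmem c (Set.notMem_empty c)

lemma IsTypeCGrading.mem_componentSum_degree_two (hℒ : IsTypeCGrading ℒ) {x : L}
    (hx : x ∈ componentSum ℒ {c | 2 ≤ degree p c}) :
    x ∈ componentSum ℒ {c | degree p c = 2} := by
  refine mem_componentSum_iff.2 fun c hc => ?_
  by_contra hne
  have hc2 : l1Norm c ≤ 2 :=
    hℒ.l1Norm_le_two ((Submodule.ne_bot_iff _).2 ⟨_, gradedProj_mem ℒ c x, hne⟩)
  have hle := natAbs_degree_le_l1Norm p c
  have hc_ge : ¬ 2 ≤ degree p c := fun h => hc (by rw [Set.mem_ofPred_eq]; omega)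
  exact hne (mem_componentSum_iff.1 hx c hc_ge)

lemma lie_mem_componentSum_degree {r s : ℤ} {x y : L}
    (hx : x ∈ componentSum ℒ {c | degree p c = r}) (hy : y ∈ componentSum ℒ {c | degree p c = s}) :
    ⁅x, y⁆ ∈ componentSum ℒ {c | degree p c = r + s} :=
  lie_mem_componentSum (fun c (hc : degree p c = r) d (hd : degree p d = s) _ =>
    (map_add (degree p) c d).trans (by rw [hc, hd])) hx hy

variable [Module.Finite ℂ L] in
lemma killingForm_eq_of_sub_mem_componentSum {r : ℤ} {v w x : L}
    (hvw : w - v ∈ componentSum ℒ {c | degree p c ≠ -r})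
    (hx : x ∈ componentSum ℒ {c | degree p c = r}) :
    killingForm ℂ L w x = killingForm ℂ L v x := by
  rw [← sub_eq_zero, ← LinearMap.sub_apply, ← map_sub]
  refine killingForm_eq_zero_of_mem_componentSum (fun c hc d hd hcd => ?_) hvw hx
  exact hc (by rw [eq_neg_of_add_eq_zero_left hcd, map_neg, hd])

end Degree

omit [Fintype κ] [Fintype I] [DecidableEq I] in
lemma strictUpperWeights_subset (hbe : ∀ i j, b i < b j → e i < e j) :
    strictUpperWeights p b ⊆ strictUpperWeights p e := by
  rintro _ ⟨i, j, hij, rfl⟩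
  exact ⟨i, j, hbe i j hij, rfl⟩

/-- The weights of a nilradical: those of positive degree, and those of the nilradical of the
parabolic subalgebra of the degree-zero part determined by the blocks `b`. -/
def nilradicalWeights (p : I ↪ κ) (b : I → ℕ) : Set (κ → ℤ) :=
  strictUpperWeights p b ∪ {c | 0 < degree p c}

variable [Module.Finite ℂ L]

namespace SymplecticFrame

variable (fr : SymplecticFrame ℒ p e)

lemma isNilpotent_ad_upperMap (hbe : ∀ i j, b i < b j → e i < e j)
    {X : Matrix I I ℂ} (hX : X ∈ strictBlockUpper ℂ b) :
    IsNilpotent (ad ℂ L (fr.upperMap X)) :=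
  isNilpotent_ad_of_mem_componentSum (-weightedDegree p fun i => b i)
    (componentSum_mono (fun _ hc => neg_pos.2 (weightedDegree_neg_of_mem_strictUpperWeights hc))
      (fr.upperMap_mem hbe hX))

lemma exists_lieEquiv_symmMap_eq (hbe : ∀ i j, b i < b j → e i < e j)
    {X : Matrix I I ℂ} (hX : X ∈ strictBlockUpper ℂ b) :
    ∃ σ : L ≃ₗ⁅ℂ⁆ L, (∀ y, σ y = nilExp (ad ℂ L (fr.upperMap X)) y) ∧
      ∀ S, σ (fr.symmMap S) =
        fr.symmMap ((IsNilpotent.exp (-X))ᵀ * S * IsNilpotent.exp (-X)) := by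
  have hXe : X ∈ strictBlockUpper ℂ e := fun i j hij =>
    hX i j (not_lt.1 fun hb => hij.not_gt (hbe i j hb))
  have hnilp := fr.isNilpotent_ad_upperMap hbe hX
  have hXnilp := isNilpotent_of_mem_strictBlockUpper hX
  obtain ⟨σ, hσ⟩ := exists_lieEquiv_eq_nilExp_ad hnilp
  refine ⟨σ, hσ, fun S => ?_⟩
  rw [hσ, nilExp_apply_of_intertwines hnilp (isNilpotent_congruenceAction hXnilp)
    (LinearMap.ext fun S => fr.lie_upperMap_symmMap hXe S), exp_congruenceAction hXnilp]

variable (hℒ : IsTypeCGrading ℒ)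
include hℒ

lemma nilExp_ad_upperMap_mem_iff (hbe : ∀ i j, b i < b j → e i < e j) {X : Matrix I I ℂ}
    (hX : X ∈ strictBlockUpper ℂ b) {A : Set (κ → ℤ)}
    (hA : ∀ c ∈ strictUpperWeights p b, ∀ d ∈ A, l1Norm (c + d) ≤ 2 → c + d ∈ A) (x : L) :
    nilExp (ad ℂ L (fr.upperMap X)) x ∈ componentSum ℒ A ↔ x ∈ componentSum ℒ A :=
  nilExp_mem_iff (fr.isNilpotent_ad_upperMap hbe hX) fun _ hy =>
    lie_mem_componentSum (fun c hc d hd hcd => hA c hc d hd (hℒ.l1Norm_le_two hcd))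
      (fr.upperMap_mem hbe hX) hy

variable [LieAlgebra.IsSimple ℂ L]

lemma eq_zero_of_lie_symmMap (he : Function.Injective e) {S : Matrix I I ℂ} (hS : S.IsSymm)
    (hminors : HasUnitPrincipalMinors S) {x : L} (hx : x ∈ componentSum ℒ (raisingWeights p e))
    (h : ⁅fr.symmMap S, x⁆ = 0) : x = 0 := by
  obtain ⟨X, hX, D, hD, hDblock, hDdet, rfl⟩ := exists_eq_exp_congruence hS hminors e
  obtain ⟨d, rfl⟩ : ∃ d, D = Matrix.diagonal d := by
    refine ⟨D.diag, (Matrix.IsDiag.diagonal_diag fun i j hij => ?_).symm⟩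
    rcases (he.ne hij).lt_or_gt with hlt | hlt
    · rw [← hD.apply, hDblock hlt]
    · exact hDblock hlt
  have hd (i : I) : d i ≠ 0 := by
    rw [Matrix.det_diagonal, isUnit_iff_ne_zero, Finset.prod_ne_zero_iff] at hDdet
    exact hDdet i (Finset.mem_univ i)
  obtain ⟨σ, hσ, hσS⟩ := fr.exists_lieEquiv_symmMap_eq (fun _ _ => id) hX
  obtain ⟨y, rfl⟩ : ∃ y, σ y = x := σ.surjective x
  rw [← hσS, ← LieEquiv.map_lie, map_eq_zero_iff σ σ.injective] at h
  rw [hσ, fr.nilExp_ad_upperMap_mem_iff hℒ (fun _ _ => id) hX fun c hc d hd =>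
    add_mem_raisingWeights hc hd] at hx
  rw [fr.eq_zero_of_lie_symmMap_diagonal hℒ hd hx h, map_zero]

lemma eq_zero_of_killingForm_lie_eq_zero (he : Function.Injective e) {S : Matrix I I ℂ}
    (hS : S.IsSymm) (hminors : HasUnitPrincipalMinors S) {w : L}
    (hw : w - fr.symmMap S ∈ componentSum ℒ {c | degree p c ≠ -2}) {r : ℤ} {x z : L}
    (hx : x ∈ componentSum ℒ (raisingWeights p e)) (hxr : x ∈ componentSum ℒ {c | degree p c = r})
    (hz : z ∈ componentSum ℒ {c | r + 1 ≤ degree p c})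
    (h : ∀ y ∈ componentSum ℒ {c | degree p c = 2 - r}, killingForm ℂ L w ⁅x + z, y⁆ = 0) :
    x = 0 := by
  refine fr.eq_zero_of_lie_symmMap hℒ he hS hminors hx ?_
  refine (LieAlgebra.IsKilling.killingForm_nondegenerate ℂ L).1 _ fun y => ?_
  obtain ⟨y, y', hy, hy', rfl⟩ :=
    Submodule.codisjoint_iff_exists_add_eq.1
      (isCompl_componentSum_compl ℒ {c | degree p c = 2 - r}).codisjoint y
  have hzy : ⁅z, y⁆ = 0 := hℒ.lie_eq_zero_of_two_lt_degree (r := r + 1) (s := 2 - r) (by omega) hz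
    (componentSum_mono (fun c (hc : degree p c = 2 - r) => hc.ge) hy)
  have hxy : ⁅x, y⁆ ∈ componentSum ℒ {c | degree p c = 2} := by
    have hmem := lie_mem_componentSum_degree hxr hy
    rwa [add_sub_cancel] at hmem
  have hxy_form : killingForm ℂ L ⁅fr.symmMap S, x⁆ y = 0 := by
    rw [LieModule.traceForm_apply_lie_apply, ← killingForm_eq_of_sub_mem_componentSum hw hxy]
    simpa only [add_lie, hzy, add_zero] using h y hy
  have hxy'_form : killingForm ℂ L ⁅fr.symmMap S, x⁆ y' = 0 := by
    refine killingForm_eq_zero_of_mem_componentSum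
      (fun c (hc : degree p c = -2 + r) d (hd : ¬ degree p d = 2 - r) hcd => hd ?_)
      (lie_mem_componentSum_degree (fr.symmMap_mem S) hxr) hy'
    rw [eq_neg_of_add_eq_zero_right hcd, map_neg, hc, neg_add, neg_neg, sub_eq_add_neg]
  rw [map_add, hxy_form, hxy'_form, add_zero]

lemma relStabiliser_nilradicalWeights_eq (he : Function.Injective e)
    (hbe : ∀ i j, b i < b j → e i < e j) {S : Matrix I I ℂ} (hS : S.IsSymm)
    (hminors : HasUnitPrincipalMinors S) {w : L}
    (hw : w - fr.symmMap S ∈ componentSum ℒ {c | degree p c ≠ -2}) :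
    relStabiliser w (componentSum ℒ (nilradicalWeights p b))
        (componentSum ℒ (nilradicalWeights p b)) =
      relStabiliser (fr.symmMap S) (componentSum ℒ {c | degree p c = 2})
        (componentSum ℒ (strictUpperWeights p b)) := by
  have hpos {r : ℤ} (hr : 0 < r) :
      componentSum ℒ {c | degree p c = r} ≤ componentSum ℒ (nilradicalWeights p b) :=
    componentSum_mono fun c (hc : degree p c = r) => .inr (hr.trans_eq hc.symm)
  have hdegree {x y : L} (hx : x ∈ componentSum ℒ {c | degree p c = 2})
      (hy : y ∈ componentSum ℒ (strictUpperWeights p b)) :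
      killingForm ℂ L w ⁅x, y⁆ = killingForm ℂ L (fr.symmMap S) ⁅x, y⁆ :=
    killingForm_eq_of_sub_mem_componentSum hw <|
      lie_mem_componentSum_degree (r := 2) (s := 0) hx <|
        componentSum_mono (fun _ => degree_eq_zero_of_mem_strictUpperWeights) hy
  ext x
  constructor
  · rintro ⟨hx, hstab⟩
    obtain ⟨u, hu, z, hz, rfl⟩ := exists_add_of_mem_componentSum_union hx
    obtain rfl : u = 0 := fr.eq_zero_of_killingForm_lie_eq_zero hℒ he hS hminors hw
      (componentSum_mono (fun c hc => .inr (strictUpperWeights_subset hbe hc)) hu)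
      (componentSum_mono (fun _ => degree_eq_zero_of_mem_strictUpperWeights) hu) hz
      fun y hy => hstab y (hpos two_pos hy)
    obtain ⟨v, hv, z', hz', rfl⟩ := exists_add_of_mem_componentSum_union <|
      componentSum_mono (S' := {c | degree p c = 1} ∪ {c | 1 + 1 ≤ degree p c})
        (fun c (hc : 0 < degree p c) => hc.eq_or_lt'.imp id id) hz
    obtain rfl : v = 0 := fr.eq_zero_of_killingForm_lie_eq_zero hℒ he hS hminors hw
      (componentSum_mono (fun _ hc => .inl hc) hv) hv hz'
      fun y hy => by simpa only [zero_add] using hstab y (hpos one_pos hy)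
    rw [zero_add, zero_add] at hstab ⊢
    have hz'2 := hℒ.mem_componentSum_degree_two hz'
    exact ⟨hz'2, fun y hy => (hdegree hz'2 hy).symm.trans <|
      hstab y (componentSum_mono (fun _ => .inl) hy)⟩
  · rintro ⟨hx, hstab⟩
    refine ⟨hpos two_pos hx, fun y hy => ?_⟩
    obtain ⟨u, hu, z, hz, rfl⟩ := exists_add_of_mem_componentSum_union hy
    have hxz : ⁅x, z⁆ = 0 := hℒ.lie_eq_zero_of_two_lt_degree (r := 2) (s := 1) (by norm_num)
      (componentSum_mono (fun c (hc : degree p c = 2) => hc.ge) hx) hz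
    rw [lie_add, hxz, add_zero, hdegree hx hu, hstab u hu]

omit [GradedLieAlgebra ℒ] [Module.Finite ℂ L] [LieAlgebra.IsSimple ℂ L] in
lemma mem_relStabiliser_symmMap_iff (hbe : ∀ i j, b i < b j → e i < e j) {S : Matrix I I ℂ}
    (hS : S.IsSymm) {A : Submodule ℂ L} {x : L} :
    x ∈ relStabiliser (fr.symmMap S) A (componentSum ℒ (strictUpperWeights p b)) ↔
      x ∈ A ∧ ∀ X ∈ strictBlockUpper ℂ b, killingForm ℂ L (fr.symmMap (S * X)) x = 0 := by
  have hform {X : Matrix I I ℂ} (hX : X ∈ strictBlockUpper ℂ b) :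
      killingForm ℂ L (fr.symmMap S) ⁅x, fr.upperMap X⁆ =
        -(2 * killingForm ℂ L (fr.symmMap (S * X)) x) := by
    have hXe : X ∈ strictBlockUpper ℂ e := fun i j hij =>
      hX i j (not_lt.1 fun hb => hij.not_gt (hbe i j hb))
    rw [← lie_skew, map_neg, ← LieModule.traceForm_apply_lie_apply, ← lie_skew,
      fr.lie_upperMap_symmMap_of_isSymm hXe hS, neg_neg, map_smul, LinearMap.smul_apply]
    rfl
  refine and_congr_right fun _ => ⟨fun h X hX => ?_, fun h y hy => ?_⟩
  · have hzero := h _ (fr.upperMap_mem hbe hX)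
    rw [hform hX, neg_eq_zero] at hzero
    exact (mul_eq_zero.1 hzero).resolve_left two_ne_zero
  · obtain ⟨X, hX, rfl⟩ := fr.exists_upperMap_eq hℒ hbe hy
    rw [hform hX, h X hX, mul_zero, neg_zero]

omit [GradedLieAlgebra ℒ] [Module.Finite ℂ L] [LieAlgebra.IsSimple ℂ L] in
lemma relStabiliser_symmMap_eq_one (hbe : ∀ i j, b i < b j → e i < e j) {D : Matrix I I ℂ}
    (hD : D.IsSymm) (hDblock : D.BlockTriangular b) (hDdet : IsUnit D.det) (A : Submodule ℂ L) :
    relStabiliser (fr.symmMap D) A (componentSum ℒ (strictUpperWeights p b)) =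
      relStabiliser (fr.symmMap 1) A (componentSum ℒ (strictUpperWeights p b)) := by
  have := D.invertibleOfIsUnitDet hDdet
  have hDinv : D⁻¹.BlockTriangular b := Matrix.blockTriangular_inv_of_blockTriangular hDblock
  ext x
  rw [fr.mem_relStabiliser_symmMap_iff hℒ hbe hD,
    fr.mem_relStabiliser_symmMap_iff hℒ hbe Matrix.isSymm_one]
  refine and_congr_right fun _ => ⟨fun h X hX => ?_, fun h X hX => ?_⟩
  · simpa only [D.mul_nonsing_inv_cancel_left _ hDdet, Matrix.one_mul] using
      h (D⁻¹ * X) (mul_mem_strictBlockUpper hDinv hX)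
  · simpa only [Matrix.one_mul] using h (D * X) (mul_mem_strictBlockUpper hDblock hX)

theorem exists_map_nilExp_relStabiliser_eq (he : Function.Injective e)
    (hbe : ∀ i j, b i < b j → e i < e j) {S : Matrix I I ℂ} (hS : S.IsSymm)
    (hminors : HasUnitPrincipalMinors S) {w : L}
    (hw : w - fr.symmMap S ∈ componentSum ℒ {c | degree p c ≠ -2}) :
    ∃ x ∈ componentSum ℒ (strictUpperWeights p b),
      (relStabiliser (fr.symmMap 1) (componentSum ℒ (nilradicalWeights p b))
          (componentSum ℒ (nilradicalWeights p b))).map (nilExp (ad ℂ L x)) =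
        relStabiliser w (componentSum ℒ (nilradicalWeights p b))
          (componentSum ℒ (nilradicalWeights p b)) := by
  obtain ⟨X, hX, D, hD, hDblock, hDdet, rfl⟩ := exists_eq_exp_congruence hS hminors b
  obtain ⟨σ, hσ, hσS⟩ := fr.exists_lieEquiv_symmMap_eq hbe hX
  have hσ_mem {A : Set (κ → ℤ)}
      (hA : ∀ c ∈ strictUpperWeights p b, ∀ d ∈ A, l1Norm (c + d) ≤ 2 → c + d ∈ A) (x : L) :
      σ x ∈ componentSum ℒ A ↔ x ∈ componentSum ℒ A := by
    rw [hσ, fr.nilExp_ad_upperMap_mem_iff hℒ hbe hX hA]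
  have hσ_two := hσ_mem (A := {c | degree p c = 2}) fun c hc d hd _ => by
    rw [Set.mem_ofPred_eq, map_add, degree_eq_zero_of_mem_strictUpperWeights hc, zero_add, hd]
  have hσ_upper := hσ_mem fun c hc d hd hcd => add_mem_strictUpperWeights hc hd hcd
  have hσ_map : nilExp (ad ℂ L (fr.upperMap X)) = (σ : L →ₗ[ℂ] L) :=
    LinearMap.ext fun y => (hσ y).symm
  refine ⟨fr.upperMap X, fr.upperMap_mem hbe hX, ?_⟩
  rw [fr.relStabiliser_nilradicalWeights_eq hℒ he hbe hS hminors hw,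
    fr.relStabiliser_nilradicalWeights_eq hℒ he hbe Matrix.isSymm_one hasUnitPrincipalMinors_one
      (by rw [sub_self]; exact zero_mem _),
    ← fr.relStabiliser_symmMap_eq_one hℒ hbe hD hDblock hDdet, hσ_map,
    map_relStabiliser σ hσ_two hσ_upper, hσS]

theorem exists_zOpen_zDense_relStabiliser_conj (he : Function.Injective e)
    (hbe : ∀ i j, b i < b j → e i < e j) {W : Submodule ℂ L}
    (hW : componentSum ℒ {c | degree p c = -2} ≤ W) :
    ∃ Ω : Set W, zOpen Ω ∧ zDense Ω ∧
      (∃ hv : fr.symmMap 1 ∈ W, ⟨fr.symmMap 1, hv⟩ ∈ Ω) ∧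
      ∀ w ∈ Ω, ∃ x ∈ componentSum ℒ (nilradicalWeights p b),
        (relStabiliser (fr.symmMap 1) (componentSum ℒ (nilradicalWeights p b))
            (componentSum ℒ (nilradicalWeights p b))).map (nilExp (ad ℂ L x)) =
          relStabiliser (w : L) (componentSum ℒ (nilradicalWeights p b))
            (componentSum ℒ (nilradicalWeights p b)) := by
  obtain ⟨Ψ, hΨ_symm, hΨ_symmMap, hΨ_sub⟩ := fr.exists_symmCoordinates hℒ
  obtain ⟨P, hP, hP_iff⟩ :=
    exists_polyFunction_ne_zero_iff_hasUnitPrincipalMinors (Ψ ∘ₗ W.subtype)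
  have hv : fr.symmMap 1 ∈ W := hW (fr.symmMap_mem 1)
  have hPv : P ⟨fr.symmMap 1, hv⟩ ≠ 0 := by
    rw [hP_iff, LinearMap.comp_apply, Submodule.subtype_apply, hΨ_symmMap 1 Matrix.isSymm_one]
    exact hasUnitPrincipalMinors_one
  refine ⟨{w | P w ≠ 0}, zOpen_ne_zero hP, zDense_ne_zero hP hPv, ⟨hv, hPv⟩, fun w hw => ?_⟩
  obtain ⟨x, hx, hmap⟩ := fr.exists_map_nilExp_relStabiliser_eq hℒ he hbe (hΨ_symm w)
    ((hP_iff w).1 hw) (hΨ_sub w)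
  exact ⟨x, componentSum_mono Set.subset_union_left hx, hmap⟩

end SymplecticFrame

end GenericStabilisers

section TypeCRootSystem

variable {m : ℕ}

/-- The roots of `sp_{2m}`, given by their coefficients on the simple roots. -/
def typeCRoots (m : ℕ) : Set (Fin m → ℤ) :=
  {γ | ∃ i j : Fin m, (i < j ∧ (γ = epsSub i j ∨ γ = -epsSub i j)) ∨
    (i ≤ j ∧ (γ = epsAdd i j ∨ γ = -epsAdd i j))}

/-- The coordinates in the basis `ε_1, …, ε_m` of the vector with given coefficients on the simple
roots `ε_1 - ε_2, …, ε_{m-1} - ε_m, 2ε_m`. -/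
def epsCoordinates (m : ℕ) : (Fin m → ℤ) →+ (Fin m → ℤ) where
  toFun γ i := (if (i : ℕ) + 1 = m then 2 else 1) * γ i -
    if (i : ℕ) = 0 then 0 else γ ⟨i - 1, (Nat.sub_le _ _).trans_lt i.2⟩
  map_zero' := by
    funext i
    simp only [Pi.zero_apply, mul_zero, ite_self, sub_zero]
  map_add' γ δ := by
    funext i
    simp only [Pi.add_apply]
    split_ifs <;> ring

lemma epsCoordinates_apply (γ : Fin m → ℤ) (i : Fin m) :
    epsCoordinates m γ i = (if (i : ℕ) + 1 = m then 2 else 1) * γ i -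
      if (i : ℕ) = 0 then 0 else γ ⟨i - 1, (Nat.sub_le _ _).trans_lt i.2⟩ := rfl

lemma epsCoordinates_epsSub (i j : Fin m) :
    epsCoordinates m (epsSub i j) = eps i - eps j := by
  funext l
  have hi := i.2
  have hj := j.2
  simp only [epsCoordinates_apply, epsSub, Pi.sub_apply, Pi.single_apply, Fin.ext_iff, Fin.le_def]
  split_ifs <;> omega

lemma epsCoordinates_epsAdd (i j : Fin m) :
    epsCoordinates m (epsAdd i j) = eps i + eps j := by
  funext l
  have hl := l.2
  have hi := i.2
  have hj := j.2
  simp only [epsCoordinates_apply, epsAdd, Pi.add_apply, Pi.single_apply, Fin.ext_iff, Fin.le_def]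
  split_ifs <;> omega

lemma sum_Iic_epsCoordinates (γ : Fin m → ℤ) (t : Fin m) :
    ∑ i ∈ Finset.Iic t, epsCoordinates m γ i = (if (t : ℕ) + 1 = m then 2 else 1) * γ t := by
  obtain ⟨t, ht⟩ := t
  induction t with
  | zero =>
    have hIic : Finset.Iic (⟨0, ht⟩ : Fin m) = {⟨0, ht⟩} := by
      ext i
      simp [Fin.le_def, Fin.ext_iff]
    rw [hIic, Finset.sum_singleton, epsCoordinates_apply, if_pos rfl, sub_zero]
  | succ t ih =>
    have hIic : Finset.Iic (⟨t + 1, ht⟩ : Fin m) =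
        insert ⟨t + 1, ht⟩ (Finset.Iic ⟨t, (Nat.lt_succ_self t).trans ht⟩) := by
      ext i
      simp only [Finset.mem_insert, Finset.mem_Iic, Fin.le_def, Fin.ext_iff]
      omega
    rw [hIic, Finset.sum_insert (by simp), ih, epsCoordinates_apply, if_neg t.succ_ne_zero,
      if_neg ht.ne, one_mul]
    exact sub_add_cancel _ _

lemma epsCoordinates_injective : Function.Injective (epsCoordinates m) := by
  intro γ δ h
  funext t
  have ht := sum_Iic_epsCoordinates γ t
  rw [h, sum_Iic_epsCoordinates] at ht
  split_ifs at ht <;> omega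

lemma neg_mem_typeCRoots {γ : Fin m → ℤ} (hγ : γ ∈ typeCRoots m) : -γ ∈ typeCRoots m := by
  obtain ⟨i, j, ⟨hij, rfl | rfl⟩ | ⟨hij, rfl | rfl⟩⟩ := hγ
  · exact ⟨i, j, .inl ⟨hij, .inr rfl⟩⟩
  · exact ⟨i, j, .inl ⟨hij, .inl (neg_neg _)⟩⟩
  · exact ⟨i, j, .inr ⟨hij, .inr rfl⟩⟩
  · exact ⟨i, j, .inr ⟨hij, .inl (neg_neg _)⟩⟩

lemma l1Norm_epsCoordinates {γ : Fin m → ℤ} (hγ : γ ∈ typeCRoots m) :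
    l1Norm (epsCoordinates m γ) = 2 := by
  obtain ⟨i, j, ⟨hij, rfl | rfl⟩ | ⟨-, rfl | rfl⟩⟩ := hγ
  · rw [epsCoordinates_epsSub, l1Norm_eps_sub_eps hij.ne]
  · rw [map_neg, epsCoordinates_epsSub, l1Norm_neg, l1Norm_eps_sub_eps hij.ne]
  · rw [epsCoordinates_epsAdd, ← l1Norm_neg, neg_add', l1Norm_neg_eps_sub_eps]
  · rw [map_neg, epsCoordinates_epsAdd, neg_add', l1Norm_neg_eps_sub_eps]

lemma eps_sub_eps_mem_image_typeCRoots {i j : Fin m} (hij : i ≠ j) :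
    eps i - eps j ∈ epsCoordinates m '' typeCRoots m := by
  rcases hij.lt_or_gt with hlt | hlt
  · exact ⟨epsSub i j, ⟨i, j, .inl ⟨hlt, .inl rfl⟩⟩, epsCoordinates_epsSub i j⟩
  · exact ⟨-epsSub j i, ⟨j, i, .inl ⟨hlt, .inr rfl⟩⟩, by
      rw [map_neg, epsCoordinates_epsSub, neg_sub]⟩

lemma eps_add_eps_mem_image_typeCRoots (i j : Fin m) :
    eps i + eps j ∈ epsCoordinates m '' typeCRoots m := by
  rcases le_total i j with hle | hle
  · exact ⟨epsAdd i j, ⟨i, j, .inr ⟨hle, .inl rfl⟩⟩, epsCoordinates_epsAdd i j⟩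
  · exact ⟨epsAdd j i, ⟨j, i, .inr ⟨hle, .inl rfl⟩⟩, by rw [epsCoordinates_epsAdd, add_comm]⟩

lemma image_epsCoordinates_typeCRoots :
    epsCoordinates m '' typeCRoots m = {c | l1Norm c = 2} := by
  refine subset_antisymm (Set.image_subset_iff.2 fun γ => l1Norm_epsCoordinates) fun c hc => ?_
  obtain ⟨i, j, u, v, hu, hv, rfl⟩ := exists_eq_single_add_single_of_l1Norm_eq_two hc
  have hne (huv : u + v = 0) : i ≠ j := by
    rintro rfl
    rw [← Pi.single_add, huv, Set.mem_ofPred_eq, l1Norm_single] at hc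
    exact absurd hc (by decide)
  obtain rfl | rfl : u = 1 ∨ u = -1 := by omega
  all_goals obtain rfl | rfl : v = 1 ∨ v = -1 := by omega
  · exact eps_add_eps_mem_image_typeCRoots i j
  · rw [Pi.single_neg, ← sub_eq_add_neg]
    exact eps_sub_eps_mem_image_typeCRoots (hne (add_neg_cancel 1))
  · rw [Pi.single_neg, neg_add_eq_sub]
    exact eps_sub_eps_mem_image_typeCRoots (hne (neg_add_cancel 1)).symm
  · rw [Pi.single_neg, Pi.single_neg, ← neg_add]
    obtain ⟨γ, hγ, hγ_eq⟩ := eps_add_eps_mem_image_typeCRoots i j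
    exact ⟨-γ, neg_mem_typeCRoots hγ, by rw [map_neg, hγ_eq]⟩

end TypeCRootSystem

section NilradicalWeights

lemma zero_notMem_nilradicalWeights {κ I : Type*} [DecidableEq κ] [Fintype I] {p : I ↪ κ}
    {b : I → ℕ} : (0 : κ → ℤ) ∉ nilradicalWeights p b := by
  rintro (hupper | hpos)
  · exact (weightedDegree_neg_of_mem_strictUpperWeights hupper).ne (map_zero _)
  · exact (show 0 < degree p 0 from hpos).ne' (map_zero _)

lemma degree_subtype_single {κ : Type*} [DecidableEq κ] (P : κ → Prop) [DecidablePred P]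
    [Fintype (Subtype P)] (a : κ) (u : ℤ) :
    degree (Function.Embedding.subtype P) (Pi.single a u) = if P a then u else 0 := by
  split_ifs with ha
  · exact (weightedDegree_single _ 1 (⟨a, ha⟩ : Subtype P) u).trans (one_mul u)
  · exact weightedDegree_single_of_notMem_range _ 1 (fun ⟨i, hi⟩ => ha ((congrArg P hi).mp i.2)) u

lemma mem_nilradicalWeights_iff {κ : Type*} [Fintype κ] [DecidableEq κ] {w : κ → ℕ}
    {b : {i // w i ≠ 0} → ℕ} (hb : ∀ i j, b i < b j ↔ w j < w i) {c : κ → ℤ} (hc : l1Norm c = 2) :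
    c ∈ nilradicalWeights (Function.Embedding.subtype fun i => w i ≠ 0) b ↔
      0 < weightedDegree (Function.Embedding.refl κ) (fun i => (w i : ℤ)) c := by
  have hweight (a : κ) (u : ℤ) :
      weightedDegree (Function.Embedding.refl κ) (fun i => (w i : ℤ)) (Pi.single a u) = w a * u :=
    weightedDegree_single _ _ a u
  obtain ⟨a, a', u, u', hu, hu', rfl⟩ := exists_eq_single_add_single_of_l1Norm_eq_two hc
  constructor
  · rintro (⟨i, j, hij, heq⟩ | hpos)
    · rw [heq, map_sub, hweight, hweight, mul_one, mul_one]
      exact sub_pos.2 (Nat.cast_lt.2 ((hb i j).1 hij))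
    · rw [Set.mem_ofPred_eq, map_add, degree_subtype_single, degree_subtype_single] at hpos
      rw [map_add, hweight, hweight]
      obtain rfl | rfl : u = 1 ∨ u = -1 := by omega
      all_goals obtain rfl | rfl : u' = 1 ∨ u' = -1 := by omega
      all_goals split_ifs at hpos <;> omega
  · have hupper {a a' : κ} (ha' : w a' ≠ 0 ∧ w a' < w a) : eps a - eps a' ∈
        nilradicalWeights (Function.Embedding.subtype fun i => w i ≠ 0) b :=
      .inl ⟨⟨a, ha'.2.ne_bot⟩, ⟨a', ha'.1⟩, (hb _ _).2 ha'.2, rfl⟩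
    intro hpos
    by_contra hc_notMem
    have hdeg := not_or.1 hc_notMem |>.2
    rw [Set.mem_ofPred_eq, map_add, degree_subtype_single, degree_subtype_single] at hdeg
    rw [map_add, hweight, hweight] at hpos
    obtain rfl | rfl : u = 1 ∨ u = -1 := by omega
    all_goals obtain rfl | rfl : u' = 1 ∨ u' = -1 := by omega
    · split_ifs at hdeg <;> omega
    · rw [Pi.single_neg, ← sub_eq_add_neg] at hc_notMem
      exact hc_notMem (hupper (by split_ifs at hdeg <;> omega))
    · rw [Pi.single_neg, neg_add_eq_sub] at hc_notMem
      exact hc_notMem (hupper (by split_ifs at hdeg <;> omega))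
    · omega

end NilradicalWeights

namespace TriangularData

variable {L SR κ : Type*} [LieRing L] [LieAlgebra ℂ L] [Fintype SR] [DecidableEq SR]
  [Fintype κ] [DecidableEq κ] (td : TriangularData L SR)

lemma isInternal_rs : DirectSum.IsInternal td.rs := by
  have hrs : Function.extend Subtype.val
      (fun γ : {γ : SR → ℤ // γ = 0 ∨ γ ∈ td.R} => td.rs γ) ⊥ = td.rs := by
    funext γ
    by_cases hγ : γ = 0 ∨ γ ∈ td.R
    · exact Subtype.val_injective.extend_apply _ _ (⟨γ, hγ⟩ : {γ : SR → ℤ // γ = 0 ∨ γ ∈ td.R})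
    · rw [Function.extend_apply' _ _ _ fun ⟨δ, hδ⟩ => hγ (hδ ▸ δ.2)]
      exact (td.rs_bot γ (fun h => hγ (.inl h)) fun h => hγ (.inr h)).symm
  exact hrs ▸ isInternal_extend td.isInternal Subtype.val_injective

/-- The grading of `L` by root spaces, with the roots moved to other coordinates by `φ`. -/
def regrade (φ : (SR → ℤ) →+ (κ → ℤ)) : (κ → ℤ) → Submodule ℂ L :=
  Function.extend φ td.rs ⊥

variable {td} {φ : (SR → ℤ) →+ (κ → ℤ)} (hφ : Function.Injective φ)
include hφ

omit [Fintype κ] [DecidableEq κ] in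
lemma gradedBracket_regrade : SetLike.GradedBracket (td.regrade φ) where
  bracket_mem c d x y hx hy := by
    by_cases hc : ∃ γ, φ γ = c
    · by_cases hd : ∃ δ, φ δ = d
      · obtain ⟨γ, rfl⟩ := hc
        obtain ⟨δ, rfl⟩ := hd
        rw [regrade, hφ.extend_apply] at hx hy
        rw [regrade, ← map_add, hφ.extend_apply]
        exact td.bracket_mem γ δ x hx y hy
      · rw [regrade, Function.extend_apply' _ _ _ hd] at hy
        rw [(Submodule.mem_bot ℂ).1 hy, lie_zero]
        exact zero_mem _
    · rw [regrade, Function.extend_apply' _ _ _ hc] at hx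
      rw [(Submodule.mem_bot ℂ).1 hx, zero_lie]
      exact zero_mem _

/-- The decomposition and bracket structure of the grading `td.regrade φ`, for injective `φ`. -/
@[reducible]
def gradedLieAlgebraRegrade : GradedLieAlgebra (td.regrade φ) where
  __ := gradedBracket_regrade hφ
  __ := (isInternal_extend td.isInternal_rs hφ).chooseDecomposition

omit [DecidableEq κ] in
lemma isTypeCGrading_regrade (hR : φ '' td.R = {c | l1Norm c = 2}) :
    IsTypeCGrading (td.regrade φ) where
  eq_bot c hc0 hc := by
    by_cases hrange : ∃ γ, φ γ = c
    · obtain ⟨γ, rfl⟩ := hrange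
      rw [regrade, hφ.extend_apply]
      refine td.rs_bot γ (fun h => hc0 (by rw [h, map_zero])) fun hγ => hc ?_
      exact hR.subset (Set.mem_image_of_mem φ hγ)
    · rw [regrade, Function.extend_apply' _ _ _ hrange]
      rfl
  finrank_eq_one c hc := by
    obtain ⟨γ, hγ, rfl⟩ := hR.superset hc
    rw [regrade, hφ.extend_apply]
    exact td.rs_dim γ hγ

omit hφ

lemma eq_zero_or_mem_R_of_rs_ne_bot {γ : SR → ℤ} (hγ : td.rs γ ≠ ⊥) : γ = 0 ∨ γ ∈ td.R := by
  by_contra! h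
  exact hγ (td.rs_bot γ h.1 h.2)

variable (td) in
lemma toSubmodule_nilrad (T : Finset SR) :
    (td.nilrad T).toSubmodule = componentSum td.rs (td.nilRoots T) := by
  have : SetLike.GradedBracket td.rs := ⟨fun γ δ x y hx hy => td.bracket_mem γ δ x hx y hy⟩
  let n : LieSubalgebra ℂ L :=
    { componentSum td.rs (td.nilRoots T) with
      lie_mem' := lie_mem_componentSum fun γ hγ δ hδ hbot => by
        simp only [nilRoots, posR, Finset.coe_filter, Finset.mem_filter, Set.mem_ofPred_eq]
          at hγ hδ ⊢
        obtain ⟨⟨-, hγ_nonneg⟩, a, ha, haγ⟩ := hγ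
        have hpos : 0 < (γ + δ) a := add_pos_of_pos_of_nonneg haγ (hδ.1.2 a)
        refine ⟨⟨?_, fun a => add_nonneg (hγ_nonneg a) (hδ.1.2 a)⟩, a, ha, hpos⟩
        exact (eq_zero_or_mem_R_of_rs_ne_bot hbot).resolve_left fun h =>
          hpos.ne' (congrFun h a) }
  refine le_antisymm ?_ (componentSum_le fun γ hγ x hx =>
    LieSubalgebra.subset_lieSpan (Set.mem_biUnion hγ hx))
  have hle : td.nilrad T ≤ n := LieSubalgebra.lieSpan_le.2 <|
    Set.iUnion₂_subset fun γ hγ x hx => mem_componentSum_of_mem (ℳ := td.rs) hγ hx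
  exact hle

include hφ

variable {I : Type*} [Fintype I] {p : I ↪ κ} {b e : I → ℕ} {T : Finset SR}

omit [Fintype κ] in
lemma componentSum_regrade_nilradicalWeights
    (hT : ∀ γ ∈ td.R, φ γ ∈ nilradicalWeights p b ↔ γ ∈ td.nilRoots T) :
    componentSum (td.regrade φ) (nilradicalWeights p b) = (td.nilrad T).toSubmodule := by
  rw [regrade, componentSum_extend hφ, toSubmodule_nilrad]
  refine componentSum_congr fun γ hγ => ?_
  rcases eq_zero_or_mem_R_of_rs_ne_bot hγ with rfl | hγ
  · refine iff_of_false (fun h => ?_) fun h => ?_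
    · rw [Set.mem_preimage, map_zero] at h
      exact zero_notMem_nilradicalWeights h
    · exact td.root_ne_zero 0 (Finset.filter_subset _ _ (Finset.filter_subset _ _ h)) rfl
  · exact hT γ hγ

omit [Fintype κ] in
lemma componentSum_regrade_degree_neg_two_le
    (hT : ∀ γ ∈ td.R, φ γ ∈ nilradicalWeights p b ↔ γ ∈ td.nilRoots T) :
    componentSum (td.regrade φ) {c | degree p c = -2} ≤ td.negNilSub T := by
  rw [regrade, componentSum_extend hφ]
  refine componentSum_le_of_ne_bot fun γ (hdeg : degree p (φ γ) = -2) hγ => ?_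
  rcases eq_zero_or_mem_R_of_rs_ne_bot hγ with rfl | hγ
  · simp at hdeg
  · refine ⟨-γ, (hT _ (td.root_neg γ hγ)).1 (.inr ?_), neg_neg γ⟩
    rw [Set.mem_ofPred_eq, map_neg, map_neg, hdeg]
    norm_num

theorem exists_isGenericStabPoint [FiniteDimensional ℂ L] [IsSimple ℂ L]
    (hR : φ '' td.R = {c | l1Norm c = 2}) (he : Function.Injective e)
    (hbe : ∀ i j, b i < b j → e i < e j)
    (hT : ∀ γ ∈ td.R, φ γ ∈ nilradicalWeights p b ↔ γ ∈ td.nilRoots T) :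
    ∃ v, td.IsGenericStabPoint T (td.nilrad T) v := by
  let := gradedLieAlgebraRegrade (td := td) hφ
  have hℒ := isTypeCGrading_regrade hφ hR
  obtain ⟨fr⟩ := hℒ.nonempty_symplecticFrame (p := p) (b := e)
  obtain ⟨Ω, hopen, hdense, hmem, hconj⟩ := fr.exists_zOpen_zDense_relStabiliser_conj hℒ he hbe
    (componentSum_regrade_degree_neg_two_le hφ hT)
  rw [componentSum_regrade_nilradicalWeights hφ hT] at hconj
  exact ⟨fr.symmMap 1, Ω, hopen, hdense, hmem, hconj⟩

end TriangularData

section NilradicalCriterion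

variable {m : ℕ} (T : Finset (Fin m))

/-- The coefficient of the coordinate `c i` in the functional `c ↦ ∑ t ∈ T, ∑ i ≤ t, c i`, whose
positive values on roots single out the nilradical attached to `T`. -/
def simpleRootWeight (i : Fin m) : ℕ := (T.filter (i ≤ ·)).card

lemma simpleRootWeight_antitone : Antitone (simpleRootWeight T) := fun _ _ hij =>
  Finset.card_le_card (Finset.monotone_filter_right T fun _ _ => hij.trans)

lemma weightedDegree_simpleRootWeight (c : Fin m → ℤ) :
    weightedDegree (Function.Embedding.refl (Fin m)) (fun i => (simpleRootWeight T i : ℤ)) c =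
      ∑ t ∈ T, ∑ i ∈ Finset.Iic t, c i := by
  simp only [weightedDegree_apply, simpleRootWeight, Finset.card_filter, Nat.cast_sum,
    Finset.sum_mul, Function.Embedding.refl_apply]
  rw [Finset.sum_comm]
  refine Finset.sum_congr rfl fun t _ => ?_
  rw [← Finset.filter_ge_eq_Iic, Finset.sum_filter]
  simp only [Nat.cast_ite, Nat.cast_one, Nat.cast_zero, ite_mul, one_mul, zero_mul]

lemma TriangularData.mem_nilRoots_iff {L : Type*} [LieRing L] [LieAlgebra ℂ L]
    (td : TriangularData L (Fin m)) {γ : Fin m → ℤ} (hγ : γ ∈ td.R) :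
    γ ∈ td.nilRoots T ↔ 0 < weightedDegree (Function.Embedding.refl (Fin m))
      (fun i => (simpleRootWeight T i : ℤ)) (epsCoordinates m γ) := by
  rw [weightedDegree_simpleRootWeight]
  simp only [sum_Iic_epsCoordinates, nilRoots, posR, Finset.mem_filter, hγ, true_and]
  have hcoeff (t : Fin m) : 0 < (if (t : ℕ) + 1 = m then 2 else 1 : ℤ) := by
    split_ifs <;> norm_num
  constructor
  · rintro ⟨hnonneg, t, ht, hγt⟩
    exact Finset.sum_pos' (fun t _ => mul_nonneg (hcoeff t).le (hnonneg t))
      ⟨t, ht, mul_pos (hcoeff t) hγt⟩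
  · intro hpos
    obtain ⟨t, ht, hγt⟩ := Finset.exists_lt_of_sum_lt (Finset.sum_const_zero.trans_lt hpos)
    have hγt_pos : 0 < γ t := pos_of_mul_pos_right hγt (hcoeff t).le
    exact ⟨(td.root_pos_or_neg γ hγ).resolve_right fun h => (h t).not_gt hγt_pos, t, ht, hγt_pos⟩

end NilradicalCriterion

/-- If `g = sp_{2m}(ℂ)` (a simple Lie algebra whose root system is of
type `C_m` in simple-root coordinates), then for every nilradical `n` of a standard
parabolic subalgebra of `g` the coadjoint representation `(n : n*)` has a
generic stabiliser. -/
theorem spCase_always_generic_stabiliser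
    {L : Type*} [LieRing L] [LieAlgebra ℂ L] [FiniteDimensional ℂ L]
    [LieAlgebra.IsSimple ℂ L]
    {m : ℕ} (hm : 0 < m) (td : TriangularData L (Fin m))
    (hC : ∀ γ : Fin m → ℤ, γ ∈ td.R ↔
      ∃ i j : Fin m, (i < j ∧ (γ = epsSub i j ∨ γ = -epsSub i j)) ∨
        (i ≤ j ∧ (γ = epsAdd i j ∨ γ = -epsAdd i j))) :
    ∀ T : Finset (Fin m), ∃ w : L, td.IsGenericStabPoint T (td.nilrad T) w := by
  intro T
  have hR : epsCoordinates m '' td.R = {c | l1Norm c = 2} :=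
    (congrArg _ (Set.ext hC)).trans image_epsCoordinates_typeCRoots
  have hblock (i j : {i // simpleRootWeight T i ≠ 0}) :
      T.card - simpleRootWeight T i < T.card - simpleRootWeight T j ↔
        simpleRootWeight T j < simpleRootWeight T i :=
    tsub_lt_tsub_iff_left_of_le (Finset.card_filter_le _ _)
  exact TriangularData.exists_isGenericStabPoint epsCoordinates_injective hR
    (p := Function.Embedding.subtype fun i => simpleRootWeight T i ≠ 0)
    (b := fun i => T.card - simpleRootWeight T i) (e := fun i => i)
    (Fin.val_injective.comp Subtype.val_injective)
    (fun i j hij => (simpleRootWeight_antitone T).reflect_lt ((hblock i j).1 hij))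
    fun γ hγ => (mem_nilradicalWeights_iff hblock (hR.subset (Set.mem_image_of_mem _ hγ))).trans
      (td.mem_nilRoots_iff T hγ).symm

end
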